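/- For all integers k ≥ 1, N ≥ 1 and m with 0 ≤ m ≤ kN, the matrix integral I_k(m;N) equals the number of k×k integer arrays x = (x_i^{(j)})_{1 ≤ i,j ≤ k} satisfying: (1) 0 ≤ x_i^{(j)} ≤ N for all 1 ≤ i, j ≤ k; (2) the anti-diagonal sum x_1^{(k)} + x_2^{(k−1)} + ⋯ + x_k^{(1)} = kN − m; and (3) the entries are weakly increasing along rows and weakly decreasing down columns, i.e. x_i^{(j)} ≤ x_i^{(j+1)} for all 1 ≤ i ≤ k, 1 ≤ j ≤ k−1, and x_{i+1}^{(j)} ≤ x_i^{(j)} for all 1 ≤ i ≤ k−1, 1 ≤ j ≤ k. -/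

import Mathlib

open MeasureTheory Polynomial

noncomputable instance (R : ℕ) : MeasurableSpace (Matrix.unitaryGroup (Fin R) ℂ) := borel _
instance (R : ℕ) : BorelSpace (Matrix.unitaryGroup (Fin R) ℂ) := ⟨rfl⟩

/-- The trace of the `j`-th exterior power of `θ`, i.e. the coefficient of `T^j` in
`det(I + T·θ)`. -/
noncomputable def extPowTrace (R : ℕ) (θ : Matrix.unitaryGroup (Fin R) ℂ) (j : ℕ) : ℂ :=
  ((1 + (X : ℂ[X]) • (θ : Matrix (Fin R) (Fin R) ℂ).map C).det).coeff j

/-- The matrix integral `I_k(n;R)`: the integral over the unitary group `U(R)` of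
`|∑_{n₁+⋯+n_k=n} ∏ᵢ Tr(Λ^{nᵢ} θ)|²`, with respect to the measure `μ` (which in the
theorems below is assumed to be the Haar probability measure). The summands with some
`nᵢ > R` vanish, since `det(I + T·θ)` has degree `R`. -/
noncomputable def matrixIntegral (k n R : ℕ)
    (μ : Measure (Matrix.unitaryGroup (Fin R) ℂ)) : ℝ :=
  ∫ θ, ‖∑ x ∈ Finset.Nat.antidiagonalTuple k n, ∏ i, extPowTrace R θ (x i)‖ ^ 2 ∂μ

/-!
For unitary `θ` the coefficient of `T ^ m` in `det (1 + T θ) ^ k` has complex conjugate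
`conj (det θ) ^ k` times the coefficient of `T ^ (k N - m)`, so the integral is a value of the
functional `L h = ∫ conj (det θ) ^ k * h θ` on polynomial functions. Invariance of the measure says
`L (Y · h) = k * tr Y * L h` for every infinitesimal left translation `Y`. For the Euler and Casimir
operators this shows, by the resolvent identity, that the Vandermonde polynomial times
`P = L (∏ j, det (1 + X_j θ))`, in `2 k` variables, is a joint eigenfunction of `∑ E_i` and
`∑ E_i ^ 2`, where `E_i = X_i ∂/∂X_i`. The first two power sums of the exponents are thus constant
on its support, and together with the bound on the degrees this only leaves the permutations of
one sequence: `P` is the Schur polynomial of the rectangle `(N ^ k)`. Specialising `k` of the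
variables to `1` and the others to `T`, the branching rule expands `P` as a sum over the
Gelfand–Tsetlin patterns with rectangular top row. These are the arrays of the theorem, the exponent
of `T` being the antidiagonal sum.
-/

namespace UnitaryMoments

section Derivations

variable {S A ι : Type*} [CommRing S] [CommRing A] [Algebra S A]

theorem derivation_prod [DecidableEq ι] (D : Derivation S A A) (s : Finset ι) (f : ι → A) :
    D (∏ i ∈ s, f i) = ∑ i ∈ s, D (f i) * ∏ j ∈ s.erase i, f j := by
  induction s using Finset.induction_on with
  | empty => simp
  | insert a s ha ih =>
    rw [Finset.prod_insert ha, D.leibniz, ih, Finset.sum_insert ha, Finset.erase_insert ha,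
      smul_eq_mul, smul_eq_mul, Finset.mul_sum, add_comm, mul_comm]
    refine congrArg _ (Finset.sum_congr rfl fun i hi => ?_)
    have hia : a ≠ i := fun h => ha (h ▸ hi)
    rw [Finset.erase_insert_of_ne hia, Finset.prod_insert (by simp [ha]), mul_left_comm]

theorem map_derivation_mul [Fintype ι] (D : Derivation S A A) (M M' : Matrix ι ι A) :
    (M * M').map D = M.map D * M' + M * M'.map D := by
  ext i j
  simp [Matrix.mul_apply, D.leibniz, Finset.sum_add_distrib, mul_comm, add_comm]

theorem map_derivation_smul_one [DecidableEq ι] (D : Derivation S A A) (a : A) :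
    (a • (1 : Matrix ι ι A)).map D = D a • (1 : Matrix ι ι A) := by
  ext i j
  by_cases hij : i = j <;> simp [hij]

variable [Fintype ι] [DecidableEq ι]

/-- Jacobi's formula: in the Leibniz expansion, differentiating the factors of the `i`-th column
is Cramer's rule for that column. -/
theorem derivation_det (D : Derivation S A A) (M : Matrix ι ι A) :
    D M.det = (M.adjugate * M.map D).trace := by
  have cramer_col (i : ι) :
      (M.adjugate * M.map D) i i = (M.updateCol i fun r => D (M r i)).det := by
    rw [← Matrix.cramer_apply, Matrix.cramer_eq_adjugate_mulVec]
    rfl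
  simp only [Matrix.trace, Matrix.diag_apply, cramer_col, Matrix.det_apply, map_sum]
  rw [Finset.sum_comm]
  refine Finset.sum_congr rfl fun σ _ => ?_
  rw [← Finset.smul_sum, Units.smul_def, Units.smul_def, map_zsmul, derivation_prod]
  refine congrArg _ (Finset.sum_congr rfl fun i _ => ?_)
  rw [← Finset.mul_prod_erase _ _ (Finset.mem_univ i), Matrix.updateCol_self]
  exact congrArg _ (Finset.prod_congr rfl fun j hj =>
    (Matrix.updateCol_ne (Finset.ne_of_mem_erase hj)).symm)

theorem derivation_det_congr {D D' : Derivation S A A} {M : Matrix ι ι A}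
    (h : M.map D = M.map D') : D M.det = D' M.det := by
  rw [derivation_det, derivation_det, h]

theorem det_smul_map_derivation_adjugate (D : Derivation S A A) (M : Matrix ι ι A) :
    M.det • M.adjugate.map D = D M.det • M.adjugate - M.adjugate * M.map D * M.adjugate := by
  have h := congrArg (·.map D * M.adjugate) M.adjugate_mul
  simp only [map_derivation_mul, map_derivation_smul_one, add_mul, Matrix.mul_assoc,
    Matrix.mul_adjugate, Matrix.mul_smul, Matrix.smul_mul, Matrix.mul_one, Matrix.one_mul] at h
  rw [← h, Matrix.mul_assoc, add_sub_cancel_right]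

/-- The derivation of `A[X]` which applies a derivation of `A` to each coefficient. -/
noncomputable def coeffwiseDerivation (D : Derivation S A A) : Derivation S A[X] A[X] :=
  PolynomialModule.equivPolynomialSelf.compDer D.mapCoeffs

theorem coeff_coeffwiseDerivation (D : Derivation S A A) (p : A[X]) (i : ℕ) :
    (coeffwiseDerivation D p).coeff i = D (p.coeff i) := rfl

/-- The derivation `X d/dX` of `A[X]`. -/
noncomputable def polyEuler (S A : Type*) [CommRing S] [CommRing A] [Algebra S A] :
    Derivation S A[X] A[X] :=
  (X : A[X]) • (derivative' : Derivation A A[X] A[X]).restrictScalars S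

theorem polyEuler_apply (p : A[X]) : polyEuler S A p = X * derivative p := rfl

theorem coeff_polyEuler (p : A[X]) (i : ℕ) : (polyEuler S A p).coeff i = i * p.coeff i := by
  rw [polyEuler_apply]
  rcases i with _ | i
  · simp
  · rw [coeff_X_mul, coeff_derivative]
    push_cast
    ring

theorem coeffwiseDerivation_polyEuler (D : Derivation S A A) (p : A[X]) :
    coeffwiseDerivation D (polyEuler S A p) = polyEuler S A (coeffwiseDerivation D p) := by
  ext i
  simp only [coeff_coeffwiseDerivation, coeff_polyEuler, D.leibniz, D.map_natCast, smul_eq_mul,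
    mul_zero, add_zero]

theorem derivation_eval_of_apply_eq_zero {D : Derivation S A A} {a : A} (ha : D a = 0)
    (p : A[X]) : D (p.eval a) = (coeffwiseDerivation D p).eval a := by
  induction p using Polynomial.induction_on' with
  | add p q hp hq => rw [eval_add, map_add, hp, hq, map_add, eval_add]
  | monomial r c =>
    have h : coeffwiseDerivation D (monomial r c) = monomial r (D c) := by
      ext i
      rw [coeff_coeffwiseDerivation, coeff_monomial, coeff_monomial, apply_ite D, map_zero]
    rw [h, eval_monomial, eval_monomial, D.leibniz, D.leibniz_pow, ha]
    simp [mul_comm]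

end Derivations

section DetOneAdd

variable {n R R' : Type*} [Fintype n] [DecidableEq n] [CommRing R] [CommRing R']

/-- The polynomial `det (1 + X • M)`, whose `r`-th coefficient is the trace of the `r`-th exterior
power of `M`. -/
noncomputable def detOneAddX (M : Matrix n n R) : R[X] :=
  (1 + (X : R[X]) • M.map C).det

theorem map_detOneAddX (f : R →+* R') (M : Matrix n n R) :
    (detOneAddX M).map f = detOneAddX (M.map f) := by
  rw [detOneAddX, detOneAddX, ← coe_mapRingHom, RingHom.map_det]
  congr 1
  ext i j
  simp [Matrix.one_apply, apply_ite (Polynomial.map f)]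

theorem mapMatrix_evalRingHom_one_add_X_smul (a : R) (M : Matrix n n R) :
    (evalRingHom a).mapMatrix (1 + (X : R[X]) • M.map C) = 1 + a • M := by
  ext i j
  simp [Matrix.one_apply, apply_ite (Polynomial.eval a), mul_comm a]

theorem eval_detOneAddX (a : R) (M : Matrix n n R) :
    (detOneAddX M).eval a = (1 + a • M).det := by
  rw [detOneAddX, ← coe_evalRingHom, RingHom.map_det, mapMatrix_evalRingHom_one_add_X_smul]

theorem natDegree_detOneAddX_le (M : Matrix n n R) :
    (detOneAddX M).natDegree ≤ Fintype.card n := by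
  have h := natDegree_det_X_add_C_le M 1
  rwa [Matrix.map_one _ C_0 C_1, add_comm] at h

theorem coeff_zero_detOneAddX (M : Matrix n n R) : (detOneAddX M).coeff 0 = 1 := by
  rw [coeff_zero_eq_eval_zero, eval_detOneAddX, zero_smul, add_zero, Matrix.det_one]

theorem coeff_card_detOneAddX (M : Matrix n n R) :
    (detOneAddX M).coeff (Fintype.card n) = M.det := by
  have h := coeff_det_X_add_C_card M 1
  rwa [Matrix.map_one _ C_0 C_1, add_comm] at h

/-- The matrix `det (1 + a • M) • (a • M) * (1 + a • M)⁻¹`, in the form which needs no inverse. -/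
def detResolvent (M : Matrix n n R) (a : R) : Matrix n n R :=
  (a • M) * (1 + a • M).adjugate

theorem adjugate_add_detResolvent (M : Matrix n n R) (a : R) :
    (1 + a • M).adjugate + detResolvent M a = (detOneAddX M).eval a • (1 : Matrix n n R) := by
  rw [eval_detOneAddX, ← Matrix.mul_adjugate, detResolvent, add_mul, one_mul]

theorem detResolvent_eq_adjugate_mul (M : Matrix n n R) (a : R) :
    detResolvent M a = (1 + a • M).adjugate * (a • M) := by
  rw [← add_right_inj (1 + a • M).adjugate, adjugate_add_detResolvent, eval_detOneAddX,
    ← Matrix.adjugate_mul, mul_add, mul_one]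

theorem trace_detResolvent (M : Matrix n n R) (a : R) :
    (detResolvent M a).trace = (X * derivative (detOneAddX M)).eval a := by
  have deriv_entries :
      (1 + (X : R[X]) • M.map C).map (derivative' : Derivation R R[X] R[X]) = M.map C := by
    ext i j
    by_cases h : i = j <;> simp [h]
  have jacobi := derivation_det (derivative' : Derivation R R[X] R[X]) (1 + (X : R[X]) • M.map C)
  rw [derivative'_apply, deriv_entries] at jacobi
  have eval_C : (evalRingHom a).mapMatrix (M.map C) = M := by
    ext i j
    simp
  rw [eval_mul, eval_X, detOneAddX, jacobi, ← coe_evalRingHom, AddMonoidHom.map_trace,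
    ← RingHom.mapMatrix_apply, map_mul, RingHom.map_adjugate,
    mapMatrix_evalRingHom_one_add_X_smul, eval_C, detResolvent_eq_adjugate_mul, Matrix.mul_smul,
    Matrix.trace_smul, smul_eq_mul]

theorem sub_smul_detResolvent_mul_detResolvent (M : Matrix n n R) (a b : R) :
    (b - a) • (detResolvent M a * detResolvent M b) =
      b • (detOneAddX M).eval b • detResolvent M a -
        a • (detOneAddX M).eval a • detResolvent M b := by
  have hb : (detOneAddX M).eval b • detResolvent M a =
      detResolvent M a * ((1 + b • M).adjugate + detResolvent M b) := by
    rw [adjugate_add_detResolvent, Matrix.mul_smul, mul_one]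
  have ha : (detOneAddX M).eval a • detResolvent M b =
      ((1 + a • M).adjugate + detResolvent M a) * detResolvent M b := by
    rw [adjugate_add_detResolvent, Matrix.smul_mul, one_mul]
  have mixed : b • (detResolvent M a * (1 + b • M).adjugate) =
      a • ((1 + a • M).adjugate * detResolvent M b) := by
    rw [detResolvent_eq_adjugate_mul, detResolvent]
    simp only [Matrix.mul_smul, Matrix.smul_mul, Matrix.mul_assoc]
    rw [smul_comm]
  rw [ha, hb, mul_add, add_mul, smul_add, smul_add, mixed]
  module

theorem sub_mul_trace_detResolvent_mul_detResolvent (M : Matrix n n R) (a b : R) :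
    (b - a) * (detResolvent M a * detResolvent M b).trace =
      b * ((detOneAddX M).eval b * (detResolvent M a).trace) -
        a * ((detOneAddX M).eval a * (detResolvent M b).trace) := by
  simpa using congrArg Matrix.trace (sub_smul_detResolvent_mul_detResolvent M a b)

end DetOneAdd

section DerivationResolvent

variable {n S A : Type*} [Fintype n] [DecidableEq n] [CommRing S] [CommRing A] [Algebra S A]
  {D : Derivation S A A} {M Y : Matrix n n A} {a : A}

theorem map_derivation_one_add_smul (hM : M.map D = Y * M) (ha : D a = 0) :
    (1 + a • M).map D = Y * (a • M) := by
  rw [Matrix.mul_smul, ← hM]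
  ext i j
  by_cases h : i = j <;> simp [h, ha]

theorem derivation_eval_detOneAddX (hM : M.map D = Y * M) (ha : D a = 0) :
    D ((detOneAddX M).eval a) = (Y * detResolvent M a).trace := by
  rw [eval_detOneAddX, derivation_det, map_derivation_one_add_smul hM ha, Matrix.trace_mul_comm,
    Matrix.mul_assoc, detResolvent]

theorem det_smul_map_derivation_adjugate_one_add (hM : M.map D = Y * M) (ha : D a = 0) :
    (detOneAddX M).eval a • (1 + a • M).adjugate.map D =
      (Y * detResolvent M a).trace • (1 + a • M).adjugate -
        (1 + a • M).adjugate * Y * detResolvent M a := by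
  have h := det_smul_map_derivation_adjugate D (1 + a • M)
  rwa [← eval_detOneAddX, map_derivation_one_add_smul hM ha, derivation_eval_detOneAddX hM ha,
    Matrix.mul_assoc, Matrix.mul_assoc, ← detResolvent, ← Matrix.mul_assoc] at h

/-- Both `D` and `X d/dX` multiply the entries of `X • M` by `1`. -/
theorem coeffwiseDerivation_detOneAddX (hM : M.map D = M) :
    coeffwiseDerivation D (detOneAddX M) = polyEuler S A (detOneAddX M) := by
  refine derivation_det_congr (Matrix.ext fun i j => ?_)
  have entry (i j : n) : D (M i j) = M i j := congrFun (congrFun hM i) j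
  ext r
  simp only [Matrix.map_apply, coeff_coeffwiseDerivation, coeff_polyEuler]
  rcases r with _ | _ | r <;> by_cases h : i = j <;>
    simp [h, coeff_X, coeff_C, coeff_one, entry]

theorem coeffwiseDerivation_detOneAddX_pow (hM : M.map D = M) (k : ℕ) :
    coeffwiseDerivation D (detOneAddX M ^ k) = polyEuler S A (detOneAddX M ^ k) := by
  rw [Derivation.leibniz_pow, Derivation.leibniz_pow, coeffwiseDerivation_detOneAddX hM]

end DerivationResolvent

section GenericMatrix

open Matrix (mvPolynomialX)

variable {n K : Type*} [Fintype n] [DecidableEq n] [Field K]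

/-- The derivation of the ring of polynomial functions on `n × n` matrices which is the
infinitesimal left translation `θ ↦ Y θ`. -/
noncomputable def leftDeriv :
    Matrix n n K →ₗ[K] Derivation K (MvPolynomial (n × n) K) (MvPolynomial (n × n) K) where
  toFun Y := MvPolynomial.mkDerivation K fun x =>
    (Y.map MvPolynomial.C * mvPolynomialX n n K : Matrix n n (MvPolynomial (n × n) K)) x.1 x.2
  map_add' Y Z := MvPolynomial.derivation_ext fun x => by
    simp [MvPolynomial.mkDerivation_X, Matrix.map_add, add_mul]
  map_smul' c Y := MvPolynomial.derivation_ext fun x => by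
    simp [MvPolynomial.mkDerivation_X, Matrix.mul_apply, Finset.smul_sum,
      MvPolynomial.smul_eq_C_mul, mul_assoc]

theorem map_leftDeriv_mvPolynomialX (Y : Matrix n n K) :
    (mvPolynomialX n n K).map (leftDeriv Y) = Y.map MvPolynomial.C * mvPolynomialX n n K :=
  Matrix.ext fun i j => MvPolynomial.mkDerivation_X K _ (i, j)

theorem leftDeriv_C (Y : Matrix n n K) (a : K) : leftDeriv Y (MvPolynomial.C a) = 0 :=
  (leftDeriv Y).map_algebraMap a

/-- The Euler derivation of the ring of polynomial functions on `n × n` matrices. -/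
noncomputable def euler : Derivation K (MvPolynomial (n × n) K) (MvPolynomial (n × n) K) :=
  leftDeriv 1

theorem map_euler : (mvPolynomialX n n K).map euler = mvPolynomialX n n K := by
  rw [euler, map_leftDeriv_mvPolynomialX, Matrix.map_one _ (map_zero _) (map_one _), one_mul]

theorem euler_eq_sum (h : MvPolynomial (n × n) K) :
    euler h = ∑ p, leftDeriv (Matrix.single p p 1) h := by
  rw [euler, ← Matrix.sum_single_one, map_sum, ← Derivation.coeFnAddMonoidHom_apply, map_sum,
    Finset.sum_apply]
  rfl

theorem leftDeriv_det (Y : Matrix n n K) :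
    leftDeriv Y (mvPolynomialX n n K).det = Y.trace • (mvPolynomialX n n K).det := by
  rw [derivation_det, map_leftDeriv_mvPolynomialX, Matrix.trace_mul_comm, Matrix.mul_assoc,
    Matrix.mul_adjugate, Matrix.mul_smul, Matrix.mul_one, Matrix.trace_smul, smul_eq_mul,
    MvPolynomial.smul_eq_C_mul, mul_comm, AddMonoidHom.map_trace]

theorem leftDeriv_det_pow (Y : Matrix n n K) (k : ℕ) :
    leftDeriv Y ((mvPolynomialX n n K).det ^ k) =
      (k * Y.trace) • (mvPolynomialX n n K).det ^ k := by
  rw [Derivation.leibniz_pow, leftDeriv_det]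
  rcases k with _ | k
  · simp
  · rw [Nat.add_sub_cancel, smul_eq_mul, mul_smul_comm, ← pow_succ, mul_smul,
      Nat.cast_smul_eq_nsmul]

variable (n) in
/-- The polynomial function `θ ↦ det (1 + a θ)`. -/
noncomputable def genericDet (a : K) : MvPolynomial (n × n) K :=
  (detOneAddX (mvPolynomialX n n K)).eval (MvPolynomial.C a)

variable (n) in
/-- The matrix of polynomial functions `θ ↦ det (1 + a θ) a θ (1 + a θ)⁻¹`. -/
noncomputable def genericResolvent (a : K) : Matrix n n (MvPolynomial (n × n) K) :=
  detResolvent (mvPolynomialX n n K) (MvPolynomial.C a)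

variable (n) in
/-- The matrix of polynomial functions `θ ↦ adj (1 + a θ)`. -/
noncomputable def genericAdjugate (a : K) : Matrix n n (MvPolynomial (n × n) K) :=
  (1 + (MvPolynomial.C a : MvPolynomial (n × n) K) • mvPolynomialX n n K).adjugate

theorem genericAdjugate_add_genericResolvent (a : K) :
    genericAdjugate n a + genericResolvent n a = genericDet n a • 1 :=
  adjugate_add_detResolvent _ _

theorem euler_eval {p : (MvPolynomial (n × n) K)[X]}
    (hp : coeffwiseDerivation euler p = polyEuler K _ p) (a : K) :
    euler (p.eval (MvPolynomial.C a)) = (polyEuler K _ p).eval (MvPolynomial.C a) := by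
  rw [derivation_eval_of_apply_eq_zero (a := MvPolynomial.C a) (euler.map_algebraMap a), hp]

theorem trace_genericResolvent (a : K) :
    (genericResolvent n a).trace = euler (genericDet n a) := by
  rw [genericDet, euler_eval (coeffwiseDerivation_detOneAddX map_euler),
    genericResolvent, trace_detResolvent, polyEuler_apply]

theorem leftDeriv_single_genericDet (p q : n) (a : K) :
    leftDeriv (Matrix.single p q 1) (genericDet n a) = genericResolvent n a q p := by
  rw [genericDet, derivation_eval_detOneAddX (map_leftDeriv_mvPolynomialX _) (leftDeriv_C _ a),
    Matrix.map_single, Matrix.trace_single_mul, map_one, one_smul]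
  rfl

theorem genericDet_ne_zero (a : K) : genericDet n a ≠ 0 := fun h => by
  have at_zero : (mvPolynomialX n n K).map (MvPolynomial.eval 0) = 0 := by
    ext i j
    simp
  have h0 := congrArg (MvPolynomial.eval (0 : n × n → K)) h
  rw [genericDet, ← eval_map_apply, map_detOneAddX, at_zero, eval_detOneAddX] at h0
  simp at h0

theorem sum_leftDeriv_adjugate (a : K) :
    ∑ p, ∑ q, leftDeriv (Matrix.single p q 1) (genericAdjugate n a p q) =
      -euler (genericAdjugate n a).trace := by
  set adj := genericAdjugate n a
  set W := genericResolvent n a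
  have det_smul (Y : Matrix n n K) : genericDet n a • adj.map (leftDeriv Y) =
      (Y.map MvPolynomial.C * W).trace • adj - adj * Y.map MvPolynomial.C * W :=
    det_smul_map_derivation_adjugate_one_add (map_leftDeriv_mvPolynomialX Y) (leftDeriv_C Y a)
  have det_mul_entry (p q : n) :
      genericDet n a * leftDeriv (Matrix.single p q 1) (adj p q) =
        W q p * adj p q - adj p p * W q q := by
    have h := congrFun (congrFun (det_smul (Matrix.single p q 1)) p) q
    rw [Matrix.map_single, map_one, Matrix.trace_single_mul, one_smul, Matrix.sub_apply,
      Matrix.mul_assoc, Matrix.mul_apply] at h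
    simpa [Matrix.mul_apply, Matrix.single_apply, ite_and] using h
  have det_mul_trace : genericDet n a * euler adj.trace =
      W.trace * adj.trace - (adj * W).trace := by
    have h := congrArg Matrix.trace (det_smul 1)
    rwa [Matrix.map_one _ (map_zero _) (map_one _), one_mul, mul_one, Matrix.trace_sub,
      Matrix.trace_smul, Matrix.trace_smul, ← AddMonoidHom.map_trace] at h
  refine mul_left_cancel₀ (genericDet_ne_zero (n := n) a) ?_
  simp only [mul_neg, det_mul_trace, Finset.mul_sum, det_mul_entry, Finset.sum_sub_distrib]
  have sum_mul_swap : ∑ p, ∑ q, W q p * adj p q = (adj * W).trace := by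
    simp only [Matrix.trace, Matrix.diag_apply, Matrix.mul_apply, mul_comm]
  have sum_diag_mul : ∑ p, ∑ q, adj p p * W q q = W.trace * adj.trace := by
    rw [mul_comm, Matrix.trace, Matrix.trace, Finset.sum_mul_sum]
    rfl
  rw [sum_mul_swap, sum_diag_mul, neg_sub]

theorem sum_leftDeriv_genericResolvent (a : K) :
    ∑ p, ∑ q, leftDeriv (Matrix.single p q 1) (genericResolvent n a p q) =
      (Fintype.card n + 1 : K) • euler (genericDet n a) -
        euler (euler (genericDet n a)) := by
  have trace_adj : (genericAdjugate n a).trace =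
      (Fintype.card n : K) • genericDet n a - euler (genericDet n a) := by
    rw [← trace_genericResolvent, eq_sub_iff_add_eq, ← Matrix.trace_add,
      genericAdjugate_add_genericResolvent,
      Matrix.trace_smul, Matrix.trace_one, smul_eq_mul, mul_comm, Nat.cast_smul_eq_nsmul,
      nsmul_eq_mul]
  have entry (p q : n) : leftDeriv (Matrix.single p q 1) (genericResolvent n a p q) =
      (if p = q then leftDeriv (Matrix.single p q 1) (genericDet n a) else 0) -
        leftDeriv (Matrix.single p q 1) (genericAdjugate n a p q) := by
    rw [eq_sub_iff_add_eq', ← map_add, ← Matrix.add_apply, genericAdjugate_add_genericResolvent]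
    by_cases h : p = q <;> simp [h]
  simp only [entry, Finset.sum_sub_distrib, sum_leftDeriv_adjugate, trace_adj,
    Finset.sum_ite_eq, Finset.mem_univ, if_true, ← euler_eq_sum, map_sub, Derivation.map_smul]
  module

theorem sum_leftDeriv_genericResolvent_mul_prod {ι : Type*} [DecidableEq ι] (a : ι → K) (b : K)
    (s : Finset ι) :
    ∑ p, ∑ q, leftDeriv (Matrix.single p q 1)
        (genericResolvent n b p q * ∏ j ∈ s, genericDet n (a j)) =
      ((Fintype.card n + 1 : K) • euler (genericDet n b) -
          euler (euler (genericDet n b))) * ∏ j ∈ s, genericDet n (a j) +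
        ∑ j ∈ s, (genericResolvent n b * genericResolvent n (a j)).trace *
          ∏ l ∈ s.erase j, genericDet n (a l) := by
  simp only [Derivation.leibniz, derivation_prod, leftDeriv_single_genericDet, smul_eq_mul,
    Finset.sum_add_distrib, ← sum_leftDeriv_genericResolvent, Finset.sum_mul]
  rw [add_comm]
  refine congrArg₂ _ ?_ ?_
  · simp only [mul_comm]
  · simp only [Matrix.trace, Matrix.diag_apply, Matrix.mul_apply, Finset.sum_mul, Finset.mul_sum,
      mul_assoc]
    exact (Finset.sum_congr rfl fun p _ => Finset.sum_comm).trans Finset.sum_comm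

theorem sub_mul_trace_genericResolvent_mul (a b : K) :
    (b - a) • (genericResolvent n a * genericResolvent n b).trace =
      b • (euler (genericDet n a) * genericDet n b) -
        a • (genericDet n a * euler (genericDet n b)) := by
  rw [← trace_genericResolvent, ← trace_genericResolvent]
  have h := sub_mul_trace_detResolvent_mul_detResolvent (mvPolynomialX n n K)
    (MvPolynomial.C a) (MvPolynomial.C b)
  rw [← map_sub] at h
  simp only [MvPolynomial.smul_eq_C_mul]
  rw [mul_comm (genericResolvent n a).trace]
  exact h

end GenericMatrix

section EulerOperators

variable {σ R : Type*} [CommRing R]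

/-- The Euler operator `X_i ∂/∂X_i`. -/
noncomputable def eulerAt (i : σ) : Derivation R (MvPolynomial σ R) (MvPolynomial σ R) :=
  (MvPolynomial.X i : MvPolynomial σ R) • MvPolynomial.pderiv i

theorem eulerAt_X [DecidableEq σ] (i j : σ) :
    eulerAt i (MvPolynomial.X j : MvPolynomial σ R) = if i = j then MvPolynomial.X i else 0 := by
  rw [eulerAt, Derivation.smul_apply, MvPolynomial.pderiv_X, Pi.single_apply]
  simp [eq_comm]

theorem coeff_eulerAt (i : σ) (F : MvPolynomial σ R) (s : σ →₀ ℕ) :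
    (eulerAt i F).coeff s = s i * F.coeff s := by
  classical
  induction F using MvPolynomial.induction_on' with
  | monomial t c =>
    rw [eulerAt, Derivation.smul_apply, smul_eq_mul, MvPolynomial.X_mul_pderiv_monomial,
      MvPolynomial.coeff_smul, MvPolynomial.coeff_monomial, nsmul_eq_mul]
    split_ifs with h <;> simp [h]
  | add p q hp hq => rw [map_add, MvPolynomial.coeff_add, hp, hq, MvPolynomial.coeff_add, mul_add]

theorem coeff_iterate_eulerAt (i : σ) (r : ℕ) (F : MvPolynomial σ R) (s : σ →₀ ℕ) :
    ((eulerAt i)^[r] F).coeff s = (s i : R) ^ r * F.coeff s := by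
  induction r with
  | zero => simp
  | succ r ih => rw [Function.iterate_succ_apply', coeff_eulerAt, ih, pow_succ', mul_assoc]

theorem sum_iterate_eulerAt_eq_smul_iff [Fintype σ] [IsDomain R] {r : ℕ} {c : R}
    {F : MvPolynomial σ R} :
    ∑ i, (eulerAt i)^[r] F = c • F ↔ ∀ s ∈ F.support, ∑ i, (s i : R) ^ r = c := by
  simp only [MvPolynomial.ext_iff, MvPolynomial.coeff_sum, coeff_iterate_eulerAt,
    MvPolynomial.coeff_smul, smul_eq_mul, ← Finset.sum_mul, mul_eq_mul_right_iff,
    MvPolynomial.mem_support_iff]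
  exact forall_congr' fun s => by tauto

theorem map_derivation_prod_eq_mul_sum_div {S A K ι : Type*} [CommRing S] [CommRing A]
    [Algebra S A] [Field K] (φ : A →+* K) (D : Derivation S A A) (s : Finset ι) (f : ι → A)
    (hf : ∀ i ∈ s, φ (f i) ≠ 0) :
    φ (D (∏ i ∈ s, f i)) = φ (∏ i ∈ s, f i) * ∑ i ∈ s, φ (D (f i)) / φ (f i) := by
  classical
  rw [derivation_prod, map_sum, Finset.mul_sum]
  refine Finset.sum_congr rfl fun i hi => ?_
  rw [← Finset.mul_prod_erase s f hi, map_mul, map_mul]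
  field_simp [hf i hi]

end EulerOperators

section Alternants

variable {σ R : Type*} [Fintype σ] [DecidableEq σ] [CommRing R]

variable (R) in
/-- The alternant `det (X_i ^ t_j)`. -/
noncomputable def alternant (t : σ → ℕ) : MvPolynomial σ R :=
  (Matrix.of fun i j => (MvPolynomial.X i : MvPolynomial σ R) ^ t j).det

theorem alternant_eq_sum (t : σ → ℕ) :
    alternant R t = ∑ τ : Equiv.Perm σ, MvPolynomial.monomial
      (Finsupp.equivFunOnFinite.symm (t ∘ τ)) ((Equiv.Perm.sign τ : ℤ) : R) := by
  rw [alternant, ← Matrix.det_transpose, Matrix.det_apply']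
  refine Finset.sum_congr rfl fun τ _ => ?_
  rw [MvPolynomial.monomial_eq, Finsupp.prod_fintype _ _ fun i => pow_zero _]
  simp

theorem exists_perm_of_mem_support_alternant {t : σ → ℕ} {s : σ →₀ ℕ}
    (hs : s ∈ (alternant R t).support) : ∃ τ : Equiv.Perm σ, ⇑s = t ∘ τ := by
  rw [MvPolynomial.mem_support_iff, alternant_eq_sum, MvPolynomial.coeff_sum] at hs
  obtain ⟨τ, -, hτ⟩ := Finset.exists_ne_zero_of_sum_ne_zero hs
  rw [MvPolynomial.coeff_monomial] at hτ
  exact ⟨τ, congrArg DFunLike.coe (ite_ne_right_iff.1 hτ).1.symm⟩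

theorem coeff_alternant_comp {t : σ → ℕ} (ht : Function.Injective t) (τ : Equiv.Perm σ) :
    (alternant R t).coeff (Finsupp.equivFunOnFinite.symm (t ∘ τ)) =
      ((Equiv.Perm.sign τ : ℤ) : R) := by
  have comp_inj (τ' : Equiv.Perm σ) : t ∘ τ' = t ∘ τ ↔ τ' = τ :=
    ht.comp_left.eq_iff.trans DFunLike.coe_fn_eq
  simp [alternant_eq_sum, MvPolynomial.coeff_sum, MvPolynomial.coeff_monomial, comp_inj]

theorem eq_alternant {t : σ → ℕ} (ht : Function.Injective t) {F : MvPolynomial σ R}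
    (h_coeff : ∀ τ : Equiv.Perm σ,
      F.coeff (Finsupp.equivFunOnFinite.symm (t ∘ τ)) = ((Equiv.Perm.sign τ : ℤ) : R))
    (h_supp : ∀ s ∈ F.support, ∃ τ : Equiv.Perm σ, ⇑s = t ∘ τ) : F = alternant R t := by
  refine MvPolynomial.ext _ _ fun s => ?_
  by_cases hs : ∃ τ : Equiv.Perm σ, ⇑s = t ∘ τ
  · obtain ⟨τ, hτ⟩ := hs
    obtain rfl : s = Finsupp.equivFunOnFinite.symm (t ∘ τ) := Finsupp.ext (congrFun hτ)
    rw [h_coeff, coeff_alternant_comp ht]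
  · rw [MvPolynomial.notMem_support_iff.1 fun h => hs (h_supp s h),
      MvPolynomial.notMem_support_iff.1 fun h => hs (exists_perm_of_mem_support_alternant h)]

theorem sum_iterate_eulerAt_alternant [IsDomain R] (t : σ → ℕ) (r : ℕ) :
    ∑ i, (eulerAt i)^[r] (alternant R t) = (∑ i, (t i : R) ^ r) • alternant R t := by
  refine sum_iterate_eulerAt_eq_smul_iff.2 fun s hs => ?_
  obtain ⟨τ, hτ⟩ := exists_perm_of_mem_support_alternant hs
  rw [hτ]
  exact Equiv.sum_comp τ fun i => (t i : R) ^ r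

end Alternants

section Vandermonde

variable {M : ℕ} {R K : Type*} [CommRing R] [Field K]

variable (R M) in
/-- The Vandermonde polynomial. -/
noncomputable def vdm : MvPolynomial (Fin M) R :=
  alternant R fun i : Fin M => (i : ℕ)

theorem vdm_eq_det_vandermonde :
    vdm M R = (Matrix.vandermonde (MvPolynomial.X : Fin M → MvPolynomial (Fin M) R)).det := rfl

theorem vdm_eq_prod_sub : vdm M R =
    ∏ p ∈ Finset.univ.sigma Finset.Ioi, (MvPolynomial.X p.2 - MvPolynomial.X p.1) := by
  rw [vdm_eq_det_vandermonde, Matrix.det_vandermonde, Finset.prod_sigma]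

theorem eval_vdm (a : Fin M → R) :
    MvPolynomial.eval a (vdm M R) = (Matrix.vandermonde a).det := by
  rw [vdm_eq_det_vandermonde, RingHom.map_det]
  congr 1
  ext i j
  simp [Matrix.vandermonde]

theorem vdm_ne_zero [IsDomain R] : vdm M R ≠ 0 := by
  rw [vdm_eq_det_vandermonde, Matrix.det_vandermonde_ne_zero_iff]
  exact MvPolynomial.X_injective

theorem eval_eulerAt_vdm {a : Fin M → K} (ha : Function.Injective a) (l : Fin M) :
    MvPolynomial.eval a (eulerAt l (vdm M K)) = MvPolynomial.eval a (vdm M K) *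
      ∑ j ∈ Finset.univ.erase l, a l / (a l - a j) := by
  have factor_ne_zero : ∀ p ∈ Finset.univ.sigma (Finset.Ioi : Fin M → Finset (Fin M)),
      MvPolynomial.eval a (MvPolynomial.X p.2 - MvPolynomial.X p.1) ≠ 0 := fun p hp => by
    simpa [sub_eq_zero, ha.eq_iff] using (Finset.mem_Ioi.1 (Finset.mem_sigma.1 hp).2).ne'
  have log_deriv_factor : ∀ i, ∀ j ∈ Finset.Ioi i,
      MvPolynomial.eval a (eulerAt l (MvPolynomial.X j - MvPolynomial.X i)) /
          MvPolynomial.eval a (MvPolynomial.X j - MvPolynomial.X i) =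
        (if l = j then a l / (a l - a i) else 0) + if l = i then a l / (a l - a j) else 0 := by
    intro i j hj
    have hij : i ≠ j := (Finset.mem_Ioi.1 hj).ne
    rw [map_sub, eulerAt_X, eulerAt_X]
    rcases eq_or_ne l j with rfl | hlj
    · simp [hij.symm]
    · rcases eq_or_ne l i with rfl | hli
      · rw [if_neg hlj, if_neg hlj, if_pos rfl, ← neg_sub (a j) (a l), div_neg]
        simp [neg_div]
      · simp [hlj, hli]
  rw [vdm_eq_prod_sub, map_derivation_prod_eq_mul_sum_div _ _ _ _ factor_ne_zero,
    Finset.sum_sigma, Finset.sum_congr rfl fun i _ => Finset.sum_congr rfl (log_deriv_factor i)]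
  have erase_eq : Finset.univ.erase l = Finset.Iio l ∪ Finset.Ioi l := by
    ext j
    simp [lt_or_lt_iff_ne]
  rw [erase_eq, Finset.sum_union (Finset.disjoint_left.2 fun j => by
    simpa using fun h : j < l => h.le)]
  simp [Finset.sum_add_distrib, Finset.sum_ite_irrel, ← Finset.sum_filter, Finset.filter_gt_eq_Iio]

end Vandermonde

section GeneratingPolynomial

variable {σ R P : Type*} [Fintype σ] [CommRing R] [CommRing P] [Algebra R P]

/-- The polynomial in the variables `X_j` whose coefficients are the values of the functional `L`
on the products of coefficients of the polynomials `q j`: it is `L (∏ j, q j (X_j))`. -/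
noncomputable def genPoly [DecidableEq σ] (L : P →ₗ[R] R) (q : σ → P[X]) : MvPolynomial σ R :=
  ∑ r ∈ Fintype.piFinset fun j => Finset.range ((q j).natDegree + 1),
    MvPolynomial.monomial (Finsupp.equivFunOnFinite.symm r) (L (∏ j, (q j).coeff (r j)))

variable [DecidableEq σ] (L : P →ₗ[R] R) (q : σ → P[X])

theorem coeff_genPoly (s : σ →₀ ℕ) :
    (genPoly L q).coeff s = L (∏ j, (q j).coeff (s j)) := by
  simp only [genPoly, MvPolynomial.coeff_sum, MvPolynomial.coeff_monomial, Equiv.symm_apply_eq]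
  rw [Finset.sum_ite_eq']
  split_ifs with hs
  · rfl
  · simp only [Fintype.mem_piFinset, Finset.mem_range, not_forall, Nat.lt_succ_iff, not_le] at hs
    obtain ⟨j, hj⟩ := hs
    rw [Finset.prod_eq_zero (Finset.mem_univ j) (coeff_eq_zero_of_natDegree_lt hj), map_zero]

theorem eval_genPoly (a : σ → R) :
    MvPolynomial.eval a (genPoly L q) = L (∏ j, (q j).eval (algebraMap R P (a j))) := by
  simp only [eval_eq_sum_range, Finset.prod_univ_sum, map_sum, genPoly]
  refine Finset.sum_congr rfl fun r _ => ?_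
  rw [MvPolynomial.eval_monomial, Finsupp.prod_fintype _ _ fun i => pow_zero _,
    Finset.prod_mul_distrib, mul_comm (∏ j, (q j).coeff (r j)), mul_comm (L _)]
  simp only [← map_pow, ← map_prod]
  rw [← Algebra.smul_def, map_smul, smul_eq_mul]
  rfl

theorem eulerAt_genPoly (i : σ) :
    eulerAt i (genPoly L q) = genPoly L (Function.update q i (polyEuler R P (q i))) := by
  refine MvPolynomial.ext _ _ fun s => ?_
  rw [coeff_eulerAt, coeff_genPoly, coeff_genPoly, ← Finset.mul_prod_erase _ _ (Finset.mem_univ i),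
    ← Finset.mul_prod_erase _ _ (Finset.mem_univ i), Function.update_self, coeff_polyEuler,
    mul_assoc, ← nsmul_eq_mul, ← nsmul_eq_mul, ← map_nsmul]
  refine congrArg (fun x => L (s i • (_ * x))) (Finset.prod_congr rfl fun j hj => ?_)
  rw [Function.update_of_ne (Finset.ne_of_mem_erase hj)]

end GeneratingPolynomial

section Semiinvariant

open Matrix (mvPolynomialX)

variable {n K σ : Type*} [Fintype n] [DecidableEq n] [Field K] {c : K}
  {L : MvPolynomial (n × n) K →ₗ[K] K}

/-- The functional `L` transforms under infinitesimal left translations like the functional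
`h ↦ ∫ conj (det θ) ^ c * h θ` under an invariant integral. -/
def IsDetSemiinvariant (c : K) (L : MvPolynomial (n × n) K →ₗ[K] K) : Prop :=
  ∀ Y h, L (leftDeriv Y h) = c * Y.trace * L h

theorem IsDetSemiinvariant.apply_euler (hL : IsDetSemiinvariant c L) (h : MvPolynomial (n × n) K) :
    L (euler h) = c * Fintype.card n * L h := by
  rw [euler, hL, Matrix.trace_one]

theorem IsDetSemiinvariant.apply_sum_leftDeriv (hL : IsDetSemiinvariant c L)
    (A : Matrix n n (MvPolynomial (n × n) K)) :
    L (∑ p, ∑ q, leftDeriv (Matrix.single p q 1) (A p q)) = c * L A.trace := by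
  have apply_entry (p q : n) : L (leftDeriv (Matrix.single p q 1) (A p q)) =
      if p = q then c * L (A p q) else 0 := by
    rw [hL]
    split_ifs with hpq
    · rw [hpq, Matrix.trace_single_eq_same, mul_one]
    · rw [Matrix.trace_single_eq_of_ne _ _ _ hpq, mul_zero, zero_mul]
  simp only [map_sum, apply_entry, Finset.sum_ite_eq, Finset.mem_univ, if_true, ← Finset.mul_sum,
    Matrix.trace, Matrix.diag_apply]

variable [Fintype σ] [DecidableEq σ]

variable (σ L) in
/-- The generating polynomial `L (∏ j, det (1 + X_j θ))` of the moments of `det (1 + T θ)`. -/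
noncomputable def detGenPoly : MvPolynomial σ K :=
  genPoly L fun _ => detOneAddX (mvPolynomialX n n K)

theorem eval_detGenPoly (a : σ → K) :
    MvPolynomial.eval a (detGenPoly σ L) = L (∏ j, genericDet n (a j)) :=
  eval_genPoly L _ a

theorem eval_genPoly_update (a : σ → K) (i : σ) (q : (MvPolynomial (n × n) K)[X]) :
    MvPolynomial.eval a
        (genPoly L (Function.update (fun _ => detOneAddX (mvPolynomialX n n K)) i q)) =
      L (q.eval (MvPolynomial.C (a i)) * ∏ j ∈ Finset.univ.erase i, genericDet n (a j)) := by
  rw [eval_genPoly, ← Finset.mul_prod_erase _ _ (Finset.mem_univ i), Function.update_self]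
  refine congrArg (fun x => L (_ * x)) (Finset.prod_congr rfl fun j hj => ?_)
  rw [Function.update_of_ne (Finset.ne_of_mem_erase hj)]
  rfl

theorem eval_eulerAt_detGenPoly (a : σ → K) (i : σ) :
    MvPolynomial.eval a (eulerAt i (detGenPoly σ L)) =
      L (euler (genericDet n (a i)) * ∏ j ∈ Finset.univ.erase i, genericDet n (a j)) := by
  rw [detGenPoly, eulerAt_genPoly, eval_genPoly_update, genericDet,
    euler_eval (coeffwiseDerivation_detOneAddX map_euler)]

theorem eval_eulerAt_eulerAt_detGenPoly (a : σ → K) (i : σ) :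
    MvPolynomial.eval a (eulerAt i (eulerAt i (detGenPoly σ L))) =
      L (euler (euler (genericDet n (a i))) *
        ∏ j ∈ Finset.univ.erase i, genericDet n (a j)) := by
  have h := coeffwiseDerivation_detOneAddX (map_euler (n := n) (K := K))
  rw [detGenPoly, eulerAt_genPoly, eulerAt_genPoly, Function.update_self, Function.update_idem,
    eval_genPoly_update, genericDet, euler_eval h,
    euler_eval ((coeffwiseDerivation_polyEuler _ _).trans (congrArg _ h))]

end Semiinvariant

section Casimir

variable {n K σ : Type*} [Fintype n] [DecidableEq n] [Field K] [Fintype σ] [DecidableEq σ] {c : K}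
  {L : MvPolynomial (n × n) K →ₗ[K] K}

theorem sum_sum_erase_add_swap {A : Type*} [AddCommMonoid A] (f : σ → σ → A) :
    ∑ i, ∑ j ∈ Finset.univ.erase i, (f i j + f j i) =
      2 • ∑ i, ∑ j ∈ Finset.univ.erase i, f i j := by
  have swap : ∑ i, ∑ j ∈ Finset.univ.erase i, f j i = ∑ i, ∑ j ∈ Finset.univ.erase i, f i j :=
    Finset.sum_comm' (by simp [eq_comm])
  simp only [Finset.sum_add_distrib, swap, two_nsmul]

theorem IsDetSemiinvariant.sum_eulerAt_detGenPoly [Infinite K] (hL : IsDetSemiinvariant c L) :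
    ∑ i, eulerAt i (detGenPoly σ L) = (c * Fintype.card n) • detGenPoly σ L := by
  refine MvPolynomial.funext fun a => ?_
  rw [map_sum, MvPolynomial.smul_eval, eval_detGenPoly, ← hL.apply_euler, derivation_prod, map_sum]
  exact Finset.sum_congr rfl fun i _ => eval_eulerAt_detGenPoly a i

/-- Apply the invariance of `L` to the matrix of functions `W_i ∏_{j ≠ i} det (1 + a_j θ)`, where
`W_i` is the resolvent at `a_i`. -/
theorem IsDetSemiinvariant.eval_eulerAt_eulerAt_eq_add_sum (hL : IsDetSemiinvariant c L)
    (a : σ → K) (i : σ) :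
    MvPolynomial.eval a (eulerAt i (eulerAt i (detGenPoly σ L))) =
      (Fintype.card n + 1 - c) * MvPolynomial.eval a (eulerAt i (detGenPoly σ L)) +
        ∑ j ∈ Finset.univ.erase i, L ((genericResolvent n (a i) * genericResolvent n (a j)).trace *
          ∏ l ∈ (Finset.univ.erase i).erase j, genericDet n (a l)) := by
  have h := hL.apply_sum_leftDeriv ((∏ j ∈ Finset.univ.erase i, genericDet n (a j)) •
    genericResolvent n (a i))
  simp only [Matrix.smul_apply, smul_eq_mul, Matrix.trace_smul, mul_comm (Finset.prod _ _)] at h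
  rw [sum_leftDeriv_genericResolvent_mul_prod, map_add, sub_mul, smul_mul_assoc, map_sub, map_smul,
    smul_eq_mul, trace_genericResolvent, ← eval_eulerAt_detGenPoly,
    ← eval_eulerAt_eulerAt_detGenPoly, map_sum] at h
  linear_combination -h

theorem sub_mul_apply_trace_resolvent_mul_resolvent (a : σ → K) {i j : σ} (hij : i ≠ j) :
    (a j - a i) * L ((genericResolvent n (a i) * genericResolvent n (a j)).trace *
        ∏ l ∈ (Finset.univ.erase i).erase j, genericDet n (a l)) =
      a j * MvPolynomial.eval a (eulerAt i (detGenPoly σ L)) -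
        a i * MvPolynomial.eval a (eulerAt j (detGenPoly σ L)) := by
  have prod_erase_i := Finset.mul_prod_erase _ (fun l => genericDet n (a l))
    (Finset.mem_erase.2 ⟨hij.symm, Finset.mem_univ j⟩)
  have prod_erase_j := Finset.mul_prod_erase _ (fun l => genericDet n (a l))
    (Finset.mem_erase.2 ⟨hij, Finset.mem_univ i⟩)
  rw [Finset.erase_right_comm] at prod_erase_j
  simp only [eval_eulerAt_detGenPoly, ← prod_erase_i, ← prod_erase_j, ← smul_eq_mul (α := K),
    ← map_smul, ← map_sub]
  rw [← smul_mul_assoc, sub_mul_trace_genericResolvent_mul, sub_mul, smul_mul_assoc,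
    smul_mul_assoc, mul_assoc, mul_comm (genericDet n (a i)), mul_assoc]

/-- The resolvent identity, with its denominators written as the logarithmic derivative of the
Vandermonde determinant. -/
theorem apply_trace_resolvent_mul_resolvent {a : σ → K} (ha : Function.Injective a) {i j : σ}
    (hij : i ≠ j) :
    L ((genericResolvent n (a i) * genericResolvent n (a j)).trace *
        ∏ l ∈ (Finset.univ.erase i).erase j, genericDet n (a l)) =
      MvPolynomial.eval a (eulerAt i (detGenPoly σ L)) * (1 - a i / (a i - a j)) +
        MvPolynomial.eval a (eulerAt j (detGenPoly σ L)) * (1 - a j / (a j - a i)) := by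
  have hsub : a j - a i ≠ 0 := sub_ne_zero.2 (ha.ne hij.symm)
  refine mul_left_cancel₀ hsub ?_
  rw [sub_mul_apply_trace_resolvent_mul_resolvent a hij, ← neg_sub (a j) (a i)]
  field_simp
  ring

theorem IsDetSemiinvariant.sum_eval_eulerAt_eulerAt_detGenPoly [Infinite K]
    (hL : IsDetSemiinvariant c L) {a : σ → K} (ha : Function.Injective a) :
    ∑ i, MvPolynomial.eval a (eulerAt i (eulerAt i (detGenPoly σ L))) +
        2 * ∑ i, MvPolynomial.eval a (eulerAt i (detGenPoly σ L)) *
          ∑ j ∈ Finset.univ.erase i, a i / (a i - a j) =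
      c * Fintype.card n * (Fintype.card n + 2 * Fintype.card σ - c - 1) *
        MvPolynomial.eval a (detGenPoly σ L) := by
  set A : σ → K := fun i => MvPolynomial.eval a (eulerAt i (detGenPoly σ L))
  have sum_A : ∑ i, A i = c * Fintype.card n * MvPolynomial.eval a (detGenPoly σ L) := by
    rw [← map_sum, hL.sum_eulerAt_detGenPoly, MvPolynomial.smul_eval]
  have sum_erase (i : σ) : ∑ j ∈ Finset.univ.erase i, A i * (1 - a i / (a i - a j)) =
      (Fintype.card σ - 1) * A i - A i * ∑ j ∈ Finset.univ.erase i, a i / (a i - a j) := by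
    rw [← Finset.mul_sum, Finset.sum_sub_distrib, Finset.sum_const, nsmul_one,
      Finset.cast_card_erase_of_mem (Finset.mem_univ i), Finset.card_univ]
    ring
  have cross_terms : ∑ i, ∑ j ∈ Finset.univ.erase i,
      L ((genericResolvent n (a i) * genericResolvent n (a j)).trace *
        ∏ l ∈ (Finset.univ.erase i).erase j, genericDet n (a l)) =
      2 * ((Fintype.card σ - 1) * ∑ i, A i -
        ∑ i, A i * ∑ j ∈ Finset.univ.erase i, a i / (a i - a j)) := by
    rw [Finset.sum_congr rfl fun i _ => Finset.sum_congr rfl fun j hj =>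
      apply_trace_resolvent_mul_resolvent ha (Finset.ne_of_mem_erase hj).symm]
    rw [sum_sum_erase_add_swap fun i j => A i * (1 - a i / (a i - a j)),
      Finset.sum_congr rfl fun i _ => sum_erase i, Finset.sum_sub_distrib, ← Finset.mul_sum,
      nsmul_eq_mul, Nat.cast_ofNat]
  rw [Finset.sum_congr rfl fun i _ => hL.eval_eulerAt_eulerAt_eq_add_sum a i,
    Finset.sum_add_distrib, ← Finset.mul_sum, cross_terms, sum_A]
  ring

theorem IsDetSemiinvariant.sum_eulerAt_vdm_mul_detGenPoly [Infinite K] {M : ℕ}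
    (hL : IsDetSemiinvariant c L) :
    ∑ i, eulerAt i (vdm M K * detGenPoly (Fin M) L) =
      (∑ i : Fin M, (i : K) + c * Fintype.card n) • (vdm M K * detGenPoly (Fin M) L) := by
  have euler_vdm := sum_iterate_eulerAt_alternant (R := K) (fun i : Fin M => (i : ℕ)) 1
  simp only [Function.iterate_one, pow_one] at euler_vdm
  simp only [Derivation.leibniz, Finset.sum_add_distrib, smul_eq_mul, ← Finset.mul_sum]
  rw [hL.sum_eulerAt_detGenPoly, vdm, euler_vdm, add_smul, mul_smul_comm, mul_smul_comm,
    mul_comm (detGenPoly _ _), add_comm]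

theorem IsDetSemiinvariant.sum_eulerAt_eulerAt_vdm_mul_detGenPoly [Infinite K] {M : ℕ}
    (hL : IsDetSemiinvariant c L) :
    ∑ i, eulerAt i (eulerAt i (vdm M K * detGenPoly (Fin M) L)) =
      (∑ i : Fin M, (i : K) ^ 2 + c * Fintype.card n * (Fintype.card n + 2 * M - c - 1)) •
        (vdm M K * detGenPoly (Fin M) L) := by
  refine mul_left_cancel₀ vdm_ne_zero (MvPolynomial.funext fun a => ?_)
  rw [map_mul, map_mul]
  by_cases ha : Function.Injective a
  · have casimir := hL.sum_eval_eulerAt_eulerAt_detGenPoly ha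
    rw [Fintype.card_fin] at casimir
    have euler_euler_vdm : ∑ i, MvPolynomial.eval a (eulerAt i (eulerAt i (vdm M K))) =
        (∑ i : Fin M, (i : K) ^ 2) * MvPolynomial.eval a (vdm M K) := by
      rw [← map_sum, ← MvPolynomial.smul_eval]
      exact congrArg _ (sum_iterate_eulerAt_alternant (fun i : Fin M => (i : ℕ)) 2)
    set G := detGenPoly (Fin M) L
    have leibniz (i : Fin M) : MvPolynomial.eval a (eulerAt i (eulerAt i (vdm M K * G))) =
        MvPolynomial.eval a G * MvPolynomial.eval a (eulerAt i (eulerAt i (vdm M K))) +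
          MvPolynomial.eval a (vdm M K) * (MvPolynomial.eval a (eulerAt i (eulerAt i G)) +
            2 * (MvPolynomial.eval a (eulerAt i G) *
              ∑ j ∈ Finset.univ.erase i, a i / (a i - a j))) := by
      simp only [Derivation.leibniz, map_add, smul_eq_mul, map_mul, eval_eulerAt_vdm ha]
      ring
    rw [map_sum, Finset.sum_congr rfl fun i _ => leibniz i, Finset.sum_add_distrib,
      ← Finset.mul_sum, ← Finset.mul_sum, Finset.sum_add_distrib, ← Finset.mul_sum, casimir,
      euler_euler_vdm, MvPolynomial.smul_eval, map_mul]
    ring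
  · have vdm_eq_zero : MvPolynomial.eval a (vdm M K) = 0 := by
      rw [eval_vdm, ← not_ne_iff, Matrix.det_vandermonde_ne_zero_iff]
      exact ha
    rw [vdm_eq_zero, zero_mul, zero_mul]

end Casimir

section JacobiTrudi

variable {M : ℕ} {R A : Type*} [CommRing R] [CommRing A] [Algebra R A]

/-- The Jacobi–Trudi matrix with entries `e_{s_i - j}`, where `e_r` is the `r`-th coefficient of
`q`, and `e_r = 0` for negative `r`. -/
noncomputable def jacobiTrudi (q : A[X]) (s : Fin M → ℕ) : Matrix (Fin M) (Fin M) A :=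
  Matrix.of fun i j => (X ^ (j : ℕ) * q).coeff (s i)

theorem coeff_vdm_mul_genPoly (L : A →ₗ[R] R) (q : A[X]) (s : Fin M →₀ ℕ) :
    (vdm M R * genPoly L fun _ => q).coeff s = L (jacobiTrudi q s).det := by
  rw [vdm, alternant_eq_sum, Finset.sum_mul, MvPolynomial.coeff_sum, ← Matrix.det_transpose,
    Matrix.det_apply, map_sum]
  refine Finset.sum_congr rfl fun τ _ => ?_
  rw [MvPolynomial.coeff_monomial_mul', coeff_genPoly, Units.smul_def, map_zsmul, zsmul_eq_mul]
  split_ifs with hτ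
  · refine congrArg (fun x => _ * L x) (Finset.prod_congr rfl fun i _ => ?_)
    rw [Matrix.transpose_apply, jacobiTrudi, Matrix.of_apply, coeff_X_pow_mul',
      if_pos (show ((τ i : Fin M) : ℕ) ≤ s i from hτ i)]
    rfl
  · obtain ⟨i, hi⟩ : ∃ i, ¬ ((τ i : Fin M) : ℕ) ≤ s i := not_forall.1 hτ
    rw [Finset.prod_eq_zero (Finset.mem_univ i), map_zero, mul_zero]
    rw [Matrix.transpose_apply, jacobiTrudi, Matrix.of_apply, coeff_X_pow_mul', if_neg hi]

theorem det_jacobiTrudi_comp_perm (q : A[X]) (s : Fin M → ℕ) (τ : Equiv.Perm (Fin M)) :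
    (jacobiTrudi q (s ∘ τ)).det = (Equiv.Perm.sign τ : ℤ) • (jacobiTrudi q s).det := by
  rw [zsmul_eq_mul, ← Matrix.det_permute]
  rfl

theorem injective_of_det_jacobiTrudi_ne_zero {q : A[X]} {s : Fin M → ℕ}
    (h : (jacobiTrudi q s).det ≠ 0) : Function.Injective s := by
  intro i j hij
  by_contra hne
  refine h (Matrix.det_zero_of_row_eq hne (funext fun l => ?_))
  rw [jacobiTrudi, Matrix.of_apply, Matrix.of_apply, hij]

theorem lt_of_det_jacobiTrudi_ne_zero {q : A[X]} {N : ℕ} (hq : q.natDegree ≤ N) {s : Fin M → ℕ}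
    (h : (jacobiTrudi q s).det ≠ 0) (i : Fin M) : s i < N + M := by
  contrapose! h
  refine Matrix.det_eq_zero_of_row_eq_zero i fun j => ?_
  rw [jacobiTrudi, Matrix.of_apply, coeff_X_pow_mul', coeff_eq_zero_of_natDegree_lt (by omega),
    ite_self]

end JacobiTrudi

section Rectangle

variable {l k N : ℕ}

/-- The rectangular partition `(N^k)`, in weakly increasing order and padded with `l` zeros. -/
def rect (l k N : ℕ) (j : Fin (l + k)) : ℕ := if (j : ℕ) < l then 0 else N

/-- The partition `rect l k N` shifted by the staircase. -/
def rectShift (l k N : ℕ) (j : Fin (l + k)) : ℕ := rect l k N j + j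

theorem rect_monotone : Monotone (rect l k N) := by
  intro i j (hij : (i : ℕ) ≤ j)
  simp only [rect]
  split_ifs <;> omega

theorem rectShift_injective : Function.Injective (rectShift l k N) := by
  intro i j h
  simp only [rectShift, rect] at h
  ext
  split_ifs at h <;> omega

theorem mem_image_rectShift {x : ℕ} :
    x ∈ Finset.univ.image (rectShift l k N) ↔ x < l ∨ N + l ≤ x ∧ x < N + (l + k) := by
  simp only [Finset.mem_image, Finset.mem_univ, true_and, rectShift, rect]
  constructor
  · rintro ⟨j, rfl⟩
    split_ifs <;> omega
  · rintro (hx | hx)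
    · exact ⟨⟨x, by omega⟩, by simp [hx]⟩
    · exact ⟨⟨x - N, by omega⟩, by rw [if_neg (by simp; omega)]; simp; omega⟩

theorem det_jacobiTrudi_rectShift {A : Type*} [CommRing A] {q : A[X]} (hq : q.natDegree ≤ N) :
    (jacobiTrudi q (rectShift l k N)).det = q.coeff 0 ^ l * q.coeff N ^ k := by
  have coeff_eq_zero {r : ℕ} (hr : N < r) : q.coeff r = 0 :=
    coeff_eq_zero_of_natDegree_lt (hq.trans_lt hr)
  have block_form : (jacobiTrudi q (rectShift l k N)).submatrix finSumFinEquiv finSumFinEquiv =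
      Matrix.fromBlocks (Matrix.of fun i j : Fin l => (X ^ (j : ℕ) * q).coeff i) 0
        (Matrix.of fun i j => jacobiTrudi q (rectShift l k N) (i.natAdd l) (j.castAdd k))
        (Matrix.of fun i j : Fin k => (X ^ (j : ℕ) * q).coeff (N + i)) := by
    refine Matrix.ext fun i j => ?_
    rcases i with i | i <;> rcases j with j | j
    · simp [jacobiTrudi, rectShift, rect]
    · simp [jacobiTrudi, rectShift, rect, coeff_X_pow_mul', show ¬ l + (j : ℕ) ≤ i by omega]
    · simp
    · simp [jacobiTrudi, rectShift, rect, coeff_X_pow_mul',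
        show N + (l + (i : ℕ)) - (l + j) = N + i - j by omega,
        show l + (j : ℕ) ≤ N + (l + i) ↔ (j : ℕ) ≤ N + i by omega]
  rw [← Matrix.det_submatrix_equiv_self finSumFinEquiv, block_form, Matrix.det_fromBlocks_zero₁₂,
    Matrix.det_of_isLowerTriangular, Matrix.det_of_isUpperTriangular]
  · simp [coeff_X_pow_mul']
  · intro i j (hij : (j : ℕ) < i)
    rw [Matrix.of_apply, coeff_X_pow_mul', coeff_eq_zero (by omega), ite_self]
  · intro i j (hij : (i : ℕ) < j)
    rw [Matrix.of_apply, coeff_X_pow_mul', if_neg hij.not_ge]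

theorem eq_of_sum_eq_of_neg_of_pos {ι : Type*} {S T : Finset ι} {f : ι → ℤ}
    (h_sum : ∑ x ∈ S, f x = ∑ x ∈ T, f x) (h_neg : ∀ x ∈ S, x ∉ T → f x < 0)
    (h_pos : ∀ x ∈ T, 0 < f x) : S = T := by
  classical
  have sum_sdiff : ∑ x ∈ S \ T, f x = ∑ x ∈ T \ S, f x := by
    have hS := Finset.sum_inter_add_sum_sdiff S T f
    have hT := Finset.sum_inter_add_sum_sdiff T S f
    rw [Finset.inter_comm] at hT
    linarith
  have neg : ∀ x ∈ S \ T, f x < 0 := by simpa using h_neg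
  have pos : ∀ x ∈ T \ S, 0 < f x := fun x hx => h_pos x (Finset.mem_sdiff.1 hx).1
  refine Finset.Subset.antisymm (Finset.sdiff_eq_empty_iff_subset.1 ?_)
    (Finset.sdiff_eq_empty_iff_subset.1 ?_) <;> by_contra hne
  · exact ((Finset.sum_neg neg (Finset.nonempty_iff_ne_empty.2 hne)).trans_le
      (Finset.sum_nonneg fun x hx => (pos x hx).le)).ne sum_sdiff
  · exact ((Finset.sum_nonpos fun x hx => (neg x hx).le).trans_lt
      (Finset.sum_pos pos (Finset.nonempty_iff_ne_empty.2 hne))).ne sum_sdiff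

theorem exists_perm_of_image_eq {ι α : Type*} [Fintype ι] [DecidableEq α] {s t : ι → α}
    (hs : Function.Injective s) (ht : Function.Injective t)
    (h : Finset.univ.image s = Finset.univ.image t) : ∃ τ : Equiv.Perm ι, s = t ∘ τ := by
  have range_eq : Set.range s = Set.range t := by
    simpa using congrArg (fun F : Finset α => (F : Set α)) h
  refine ⟨(Equiv.ofInjective s hs).trans
    ((Equiv.setCongr range_eq).trans (Equiv.ofInjective t ht).symm), funext fun i => ?_⟩
  rw [Function.comp_apply, Equiv.trans_apply, Equiv.trans_apply, Equiv.apply_ofInjective_symm ht]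
  rfl

/-- The quadratic polynomial `(x - l + 1/2) (x - N - l + 1/2)` is negative on the interval
`[l, N + l)` between the two runs of exponents of the rectangle, and positive outside. -/
theorem exists_perm_eq_rectShift {s : Fin (l + k) → ℕ} (hs : Function.Injective s)
    (hlt : ∀ i, s i < N + (l + k)) (h1 : ∑ i, (s i : ℤ) = ∑ i, (rectShift l k N i : ℤ))
    (h2 : ∑ i, (s i : ℤ) ^ 2 = ∑ i, (rectShift l k N i : ℤ) ^ 2) :
    ∃ τ : Equiv.Perm (Fin (l + k)), s = rectShift l k N ∘ τ := by
  let f : ℕ → ℤ := fun x => (2 * x - 2 * l + 1) * (2 * x - 2 * N - 2 * l + 1)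
  have sum_f (t : Fin (l + k) → ℕ) : ∑ i, f (t i) = 4 * ∑ i, (t i : ℤ) ^ 2 +
      (4 - 8 * l - 4 * N) * ∑ i, (t i : ℤ) + (l + k) * ((1 - 2 * l) * (1 - 2 * N - 2 * l)) := by
    have expand (i) : f (t i) = 4 * (t i : ℤ) ^ 2 + (4 - 8 * l - 4 * N) * (t i : ℤ) +
        (1 - 2 * l) * (1 - 2 * N - 2 * l) := by ring
    simp only [expand, Finset.sum_add_distrib, ← Finset.mul_sum, Finset.sum_const]
    rw [Finset.card_univ, Fintype.card_fin, nsmul_eq_mul]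
    push_cast
    ring
  refine exists_perm_of_image_eq hs rectShift_injective
    (eq_of_sum_eq_of_neg_of_pos (f := f) ?_ (fun x hx hx' => ?_) fun x hx => ?_)
  · rw [Finset.sum_image hs.injOn, Finset.sum_image rectShift_injective.injOn, sum_f, sum_f, h1, h2]
  · obtain ⟨i, -, rfl⟩ := Finset.mem_image.1 hx
    have := hlt i
    rw [mem_image_rectShift] at hx'
    exact mul_neg_of_pos_of_neg (by omega) (by omega)
  · rcases mem_image_rectShift.1 hx with hx | hx
    · exact mul_pos_of_neg_of_neg (by omega) (by omega)
    · exact mul_pos (by omega) (by omega)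

/-- The first two power sums of the exponents are constant on the support of an eigenfunction. -/
theorem IsDetSemiinvariant.vdm_mul_detGenPoly {n K : Type*} [Fintype n] [DecidableEq n] [Field K]
    [CharZero K] {c : K} {L : MvPolynomial (n × n) K →ₗ[K] K} (hL : IsDetSemiinvariant c L)
    (hdet : L ((Matrix.mvPolynomialX n n K).det ^ k) = 1) :
    vdm (l + k) K * detGenPoly (Fin (l + k)) L = alternant K (rectShift l k (Fintype.card n)) := by
  have hdeg := natDegree_detOneAddX_le (Matrix.mvPolynomialX n n K)
  set F := vdm (l + k) K * detGenPoly (Fin (l + k)) L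
  have coeff_F (s : Fin (l + k) →₀ ℕ) :
      F.coeff s = L (jacobiTrudi (detOneAddX (Matrix.mvPolynomialX n n K)) s).det :=
    coeff_vdm_mul_genPoly L _ s
  have coeff_perm (τ : Equiv.Perm (Fin (l + k))) :
      F.coeff (Finsupp.equivFunOnFinite.symm (rectShift l k (Fintype.card n) ∘ τ)) =
        ((Equiv.Perm.sign τ : ℤ) : K) := by
    rw [coeff_F, Finsupp.coe_equivFunOnFinite_symm, det_jacobiTrudi_comp_perm, map_zsmul,
      det_jacobiTrudi_rectShift hdeg, coeff_zero_detOneAddX, coeff_card_detOneAddX, one_pow,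
      one_mul, hdet, zsmul_one]
  have mem_support :
      Finsupp.equivFunOnFinite.symm (rectShift l k (Fintype.card n)) ∈ F.support := by
    rw [MvPolynomial.mem_support_iff]
    exact (coeff_perm 1).trans_ne (by simp)
  have power_sum (r : ℕ) (c' : K) (hF : ∑ i, (eulerAt i)^[r] F = c' • F) :
      ∀ s ∈ F.support, ∑ i, (s i : ℤ) ^ r = ∑ i, (rectShift l k (Fintype.card n) i : ℤ) ^ r :=
    fun s hs => by
      have h := sum_iterate_eulerAt_eq_smul_iff.1 hF
      exact_mod_cast (h s hs).trans (h _ mem_support).symm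
  refine eq_alternant rectShift_injective coeff_perm fun s hs => ?_
  have hdet_ne : (jacobiTrudi (detOneAddX (Matrix.mvPolynomialX n n K)) s).det ≠ 0 := fun h0 =>
    MvPolynomial.mem_support_iff.1 hs (by rw [coeff_F, h0, map_zero])
  refine exists_perm_eq_rectShift (injective_of_det_jacobiTrudi_ne_zero hdet_ne)
    (lt_of_det_jacobiTrudi_ne_zero hdeg hdet_ne) ?_
    (power_sum 2 _ hL.sum_eulerAt_eulerAt_vdm_mul_detGenPoly s hs)
  simpa only [pow_one] using power_sum 1 _ hL.sum_eulerAt_vdm_mul_detGenPoly s hs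

end Rectangle

section Branching

variable {R S : Type*} [CommRing R] [CommRing S]

/-- The Schur polynomial of a weakly increasing sequence `lam`, evaluated at the point `x`, defined
through the branching rule: the variable `x 0` is removed by summing over the sequences `ν` that
interlace with `lam`. -/
def schurEval : (M : ℕ) → (Fin M → ℕ) → (Fin M → R) → R
  | 0, _, _ => 1
  | M + 1, lam, x => x 0 ^ lam 0 *
      ∑ ν ∈ Fintype.piFinset fun j : Fin M => Finset.Icc (lam j.castSucc) (lam j.succ),
        (∏ j, x 0 ^ (lam j.succ - ν j)) * schurEval M ν (Fin.tail x)

theorem map_schurEval (f : R →+* S) (M : ℕ) (lam : Fin M → ℕ) (x : Fin M → R) :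
    f (schurEval M lam x) = schurEval M lam fun i => f (x i) := by
  induction M with
  | zero => simp only [schurEval, map_one]
  | succ M ih =>
    simp only [schurEval, map_mul, map_sum, map_pow, map_prod, ih]
    rfl

theorem sub_mul_sum_Icc_pow_mul_pow (a b : R) {p q : ℕ} (h : p ≤ q) (j : ℕ) :
    (b - a) * ∑ ν ∈ Finset.Icc p q, a ^ (q - ν) * b ^ (ν + j) =
      b ^ (q + (j + 1)) - a ^ (q - p + 1) * b ^ (p + j) := by
  obtain ⟨d, rfl⟩ := Nat.exists_eq_add_of_le h
  have hsum : ∑ ν ∈ Finset.Icc p (p + d), a ^ (p + d - ν) * b ^ (ν + j) =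
      (∑ i ∈ Finset.range (d + 1), b ^ i * a ^ (d + 1 - 1 - i)) * b ^ (p + j) := by
    rw [← Finset.Ico_succ_right_eq_Icc, Finset.sum_Ico_eq_sum_range, Finset.sum_mul]
    refine Finset.sum_congr (by rw [Order.succ_eq_add_one]; congr 1; omega) fun i _ => ?_
    rw [show p + d - (p + i) = d + 1 - 1 - i by omega]
    ring
  rw [hsum, ← mul_assoc, mul_comm (b - a), geom_sum₂_mul, Nat.add_sub_cancel_left]
  ring

theorem det_vandermonde_succ {M : ℕ} (x : Fin (M + 1) → R) :
    (Matrix.vandermonde x).det =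
      (∏ i, (Fin.tail x i - x 0)) * (Matrix.vandermonde (Fin.tail x)).det := by
  rw [Matrix.det_vandermonde, Matrix.det_vandermonde, Fin.prod_univ_succ, Fin.prod_Ioi_zero]
  simp only [Fin.prod_Ioi_succ]
  rfl

variable {M : ℕ} {lam : Fin (M + 1) → ℕ}

theorem monotone_of_mem_piFinset_Icc {ν : Fin M → ℕ}
    (hν : ν ∈ Fintype.piFinset fun j : Fin M => Finset.Icc (lam j.castSucc) (lam j.succ)) :
    Monotone ν := by
  rcases M with _ | M
  · exact fun i => i.elim0
  · refine Fin.monotone_iff_le_succ.2 fun i => ?_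
    have h1 := (Finset.mem_Icc.1 (Fintype.mem_piFinset.1 hν i.castSucc)).2
    have h2 := (Finset.mem_Icc.1 (Fintype.mem_piFinset.1 hν i.succ)).1
    rw [Fin.succ_castSucc] at h1
    exact h1.trans h2

/-- Subtracting from each column a multiple of the previous one clears the first row. -/
theorem det_pow_succ (hlam : Monotone lam) (x : Fin (M + 1) → R) :
    (Matrix.of fun i j => x i ^ (lam j + j)).det =
      x 0 ^ lam 0 * (Matrix.of fun i j : Fin M => Fin.tail x i ^ (lam j.succ + (j + 1)) -
        x 0 ^ (lam j.succ - lam j.castSucc + 1) * Fin.tail x i ^ (lam j.castSucc + j)).det := by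
  let B : Matrix (Fin (M + 1)) (Fin (M + 1)) R := Matrix.of fun i j =>
    Fin.cases (x i ^ lam 0) (fun j' => x i ^ (lam j'.succ + (j' + 1)) -
      x 0 ^ (lam j'.succ - lam j'.castSucc + 1) * x i ^ (lam j'.castSucc + j')) j
  have det_eq : (Matrix.of fun i j => x i ^ (lam j + j)).det = B.det :=
    Matrix.det_eq_of_forall_col_eq_smul_add_pred
      (fun j => x 0 ^ (lam j.succ - lam j.castSucc + 1)) (fun i => by simp [B])
      fun i j => by simp [B]
  have first_row (j : Fin M) : B 0 j.succ = 0 := by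
    have hj : lam j.castSucc ≤ lam j.succ := hlam Fin.castSucc_lt_succ.le
    simp only [B, Matrix.of_apply, Fin.cases_succ, ← pow_add, sub_eq_zero]
    congr 1
    omega
  rw [det_eq, Matrix.det_succ_row_zero, Fin.sum_univ_succ, Finset.sum_eq_zero fun j _ => by
    rw [first_row, mul_zero, zero_mul], add_zero, Fin.val_zero, pow_zero, one_mul]
  rfl

theorem det_pow_sub_pow_mul_pow (hlam : Monotone lam) (a : R) (y : Fin M → R) :
    (Matrix.of fun i j : Fin M => y i ^ (lam j.succ + (j + 1)) -
        a ^ (lam j.succ - lam j.castSucc + 1) * y i ^ (lam j.castSucc + j)).det =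
      (∏ i, (y i - a)) *
        ∑ ν ∈ Fintype.piFinset fun j : Fin M => Finset.Icc (lam j.castSucc) (lam j.succ),
          (∏ j, a ^ (lam j.succ - ν j)) * (Matrix.of fun i j => y i ^ (ν j + j)).det := by
  let g : Fin M → ℕ → Fin M → R := fun j ν i => a ^ (lam j.succ - ν) * y i ^ (ν + j)
  let I : Fin M → Finset ℕ := fun j => Finset.Icc (lam j.castSucc) (lam j.succ)
  have factor : (Matrix.of fun i j : Fin M => y i ^ (lam j.succ + (j + 1)) -
      a ^ (lam j.succ - lam j.castSucc + 1) * y i ^ (lam j.castSucc + j)) =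
        Matrix.of fun i j => (y i - a) * (Matrix.of fun j => ∑ ν ∈ I j, g j ν).transpose i j := by
    refine Matrix.ext fun i j => ?_
    have hj : lam j.castSucc ≤ lam j.succ := hlam Fin.castSucc_lt_succ.le
    simp only [Matrix.of_apply, Matrix.transpose_apply, Finset.sum_apply, g, I]
    rw [sub_mul_sum_Icc_pow_mul_pow _ _ hj]
  have expand :=
    (Matrix.detRowAlternating (R := R) (n := Fin M)).toMultilinearMap.map_sum_finset g I
  rw [factor, Matrix.det_mul_column, Matrix.det_transpose]
  refine congrArg _ (expand.trans (Finset.sum_congr rfl fun ν _ => ?_))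
  rw [← Matrix.det_mul_row, ← Matrix.det_transpose]
  rfl

theorem det_pow_eq_det_vandermonde_mul_schurEval (M : ℕ) {lam : Fin M → ℕ} (hlam : Monotone lam)
    (x : Fin M → R) :
    (Matrix.of fun i j => x i ^ (lam j + j)).det =
      (Matrix.vandermonde x).det * schurEval M lam x := by
  induction M with
  | zero => simp [schurEval]
  | succ M ih =>
    rw [det_pow_succ hlam, det_pow_sub_pow_mul_pow hlam, det_vandermonde_succ, schurEval,
      Finset.sum_congr rfl fun ν hν => by rw [ih (monotone_of_mem_piFinset_Icc hν)]]
    simp only [Finset.mul_sum]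
    exact Finset.sum_congr rfl fun ν _ => by ring

end Branching

theorem IsDetSemiinvariant.detGenPoly_eq_schurEval {n K : Type*} [Fintype n] [DecidableEq n]
    [Field K] [CharZero K] {c : K} {L : MvPolynomial (n × n) K →ₗ[K] K}
    (hL : IsDetSemiinvariant c L) {k : ℕ} (hdet : L ((Matrix.mvPolynomialX n n K).det ^ k) = 1)
    (l : ℕ) :
    detGenPoly (Fin (l + k)) L =
      schurEval (l + k) (rect l k (Fintype.card n)) MvPolynomial.X :=
  mul_left_cancel₀ vdm_ne_zero <| (hL.vdm_mul_detGenPoly hdet).trans <|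
    det_pow_eq_det_vandermonde_mul_schurEval (l + k) rect_monotone MvPolynomial.X

section Patterns

variable {M : ℕ} {y : ℕ → ℕ → ℕ}

/-- `y` is the Gelfand–Tsetlin pattern with top row `lam`, drawn so that the rows of the pattern
are the antidiagonals of `y`. -/
structure IsGTPattern (M : ℕ) (lam : Fin M → ℕ) (y : ℕ → ℕ → ℕ) : Prop where
  zero : ∀ i j, M ≤ i + j → y i j = 0
  top : ∀ j : Fin M, y (M - 1 - j) j = lam j
  col : ∀ i j, i + j + 1 < M → y (i + 1) j ≤ y i j
  row : ∀ i j, i + j + 1 < M → y i j ≤ y i (j + 1)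

theorem IsGTPattern.row_le {lam : Fin M → ℕ} (h : IsGTPattern M lam y)
    (i j d : ℕ) (hd : i + j + d < M) : y i j ≤ y i (j + d) := by
  induction d with
  | zero => exact le_rfl
  | succ d ih => exact (ih (by omega)).trans (h.row i (j + d) (by omega))

theorem IsGTPattern.col_le {lam : Fin M → ℕ} (h : IsGTPattern M lam y)
    (i j d : ℕ) (hd : i + j + d < M) : y (i + d) j ≤ y i j := by
  induction d with
  | zero => exact le_rfl
  | succ d ih => exact (h.col (i + d) j (by omega)).trans (ih (by omega))

/-- Add a new top row to a pattern. -/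
def addTop (lam : Fin (M + 1) → ℕ) (y : ℕ → ℕ → ℕ) (i j : ℕ) : ℕ :=
  if h : i + j = M then lam ⟨j, by omega⟩ else y i j

open Classical in
/-- The finite set of Gelfand–Tsetlin patterns with top row `lam`. -/
noncomputable def gtPatterns : (M : ℕ) → (Fin M → ℕ) → Finset (ℕ → ℕ → ℕ)
  | 0, _ => {fun _ _ => 0}
  | M + 1, lam => ((Fintype.piFinset fun j : Fin M =>
      Finset.Icc (lam j.castSucc) (lam j.succ)).sigma fun ν => gtPatterns M ν).image
        fun p => addTop lam p.2

theorem addTop_of_lt (lam : Fin (M + 1) → ℕ) (y : ℕ → ℕ → ℕ) {i j : ℕ} (h : i + j < M) :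
    addTop lam y i j = y i j := dif_neg h.ne

theorem addTop_of_eq (lam : Fin (M + 1) → ℕ) (y : ℕ → ℕ → ℕ) {i j : ℕ} (h : i + j = M) :
    addTop lam y i j = lam ⟨j, by omega⟩ := dif_pos h

theorem isGTPattern_addTop {lam : Fin (M + 1) → ℕ} {ν : Fin M → ℕ}
    (hν : ∀ j : Fin M, lam j.castSucc ≤ ν j ∧ ν j ≤ lam j.succ) (hy : IsGTPattern M ν y) :
    IsGTPattern (M + 1) lam (addTop lam y) where
  zero i j h := by
    rw [addTop, dif_neg (by omega)]
    exact hy.zero i j (by omega)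
  top j := addTop_of_eq _ _ (by omega)
  col i j h := by
    rcases Nat.lt_or_ge (i + j + 1) M with h' | h'
    · rw [addTop_of_lt _ _ (by omega), addTop_of_lt _ _ (by omega)]
      exact hy.col i j h'
    · rw [addTop_of_eq _ _ (by omega), addTop_of_lt _ _ (by omega)]
      have h1 := (hν ⟨j, by omega⟩).1
      rw [← hy.top, show M - 1 - j = i by omega] at h1
      exact h1
  row i j h := by
    rcases Nat.lt_or_ge (i + j + 1) M with h' | h'
    · rw [addTop_of_lt _ _ (by omega), addTop_of_lt _ _ (by omega)]
      exact hy.row i j h'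
    · rw [addTop_of_eq (i := i) (j := j + 1) _ _ (by omega), addTop_of_lt _ _ (by omega)]
      have h1 := (hν ⟨j, by omega⟩).2
      rw [← hy.top, show M - 1 - j = i by omega] at h1
      exact h1

theorem IsGTPattern.exists_addTop {lam : Fin (M + 1) → ℕ}
    (hy : IsGTPattern (M + 1) lam y) : ∃ (ν : Fin M → ℕ) (z : ℕ → ℕ → ℕ),
      (∀ j : Fin M, lam j.castSucc ≤ ν j ∧ ν j ≤ lam j.succ) ∧ IsGTPattern M ν z ∧
        addTop lam z = y := by
  refine ⟨fun j => y (M - 1 - j) j, fun i j => if i + j < M then y i j else 0, fun j => ?_, ?_, ?_⟩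
  · have hj := j.2
    have h1 := hy.top j.castSucc
    have h2 := hy.top j.succ
    have h3 := hy.col (M - 1 - j) j (by omega)
    have h4 := hy.row (M - 1 - j) j (by omega)
    simp only [Fin.val_castSucc, Fin.val_succ] at h1 h2
    rw [← h1, ← h2]
    rw [show M + 1 - 1 - (j : ℕ) = M - 1 - j + 1 by omega,
      show M + 1 - 1 - ((j : ℕ) + 1) = M - 1 - j by omega]
    exact ⟨h3, h4⟩
  · constructor
    · intro i j h
      rw [if_neg (by omega)]
    · intro j
      rw [if_pos (by omega)]
    · intro i j h
      rw [if_pos (by omega), if_pos (by omega)]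
      exact hy.col i j (by omega)
    · intro i j h
      rw [if_pos (by omega), if_pos (by omega)]
      exact hy.row i j (by omega)
  · funext i j
    rcases Nat.lt_trichotomy (i + j) M with h | h | h
    · rw [addTop_of_lt _ _ h, if_pos h]
    · rw [addTop_of_eq _ _ h, ← hy.top]
      congr 1
      simp only
      omega
    · rw [addTop, dif_neg h.ne', if_neg (by omega), hy.zero i j (by omega)]

theorem mem_gtPatterns {lam : Fin M → ℕ} :
    y ∈ gtPatterns M lam ↔ IsGTPattern M lam y := by
  induction M generalizing y with
  | zero =>
    rw [gtPatterns, Finset.mem_singleton]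
    constructor
    · rintro rfl
      exact ⟨fun _ _ _ => rfl, fun j => j.elim0, fun _ _ _ => le_rfl, fun _ _ _ => le_rfl⟩
    · exact fun h => funext fun i => funext fun j => h.zero i j (Nat.zero_le _)
  | succ M ih =>
    simp only [gtPatterns, Finset.mem_image, Finset.mem_sigma, Fintype.mem_piFinset, Finset.mem_Icc,
      ih]
    constructor
    · rintro ⟨⟨ν, z⟩, ⟨hν, hz⟩, rfl⟩
      exact isGTPattern_addTop hν hz
    · intro hy
      obtain ⟨ν, z, hν, hz, rfl⟩ := hy.exists_addTop
      exact ⟨⟨ν, z⟩, ⟨hν, hz⟩, rfl⟩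

theorem sum_gtPatterns_succ {A : Type*} [AddCommMonoid A] (lam : Fin (M + 1) → ℕ)
    (f : (ℕ → ℕ → ℕ) → A) :
    ∑ y ∈ gtPatterns (M + 1) lam, f y =
      ∑ ν ∈ Fintype.piFinset fun j : Fin M => Finset.Icc (lam j.castSucc) (lam j.succ),
        ∑ y ∈ gtPatterns M ν, f (addTop lam y) := by
  classical
  rw [gtPatterns, Finset.sum_image, Finset.sum_sigma]
  rintro ⟨ν, y⟩ hy ⟨ν', y'⟩ hy' h
  have hp : IsGTPattern M ν y := mem_gtPatterns.1 (Finset.mem_sigma.1 hy).2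
  have hp' : IsGTPattern M ν' y' := mem_gtPatterns.1 (Finset.mem_sigma.1 hy').2
  have hyy : y = y' := by
    funext i j
    rcases Nat.lt_or_ge (i + j) M with hij | hij
    · have := congrFun (congrFun h i) j
      simpa only [addTop_of_lt _ _ hij] using this
    · rw [hp.zero i j hij, hp'.zero i j hij]
  subst hyy
  have : ν = ν' := funext fun j => by rw [← hp.top, ← hp'.top]
  subst this
  rfl

variable {R : Type*} [CommRing R]

/-- The point whose last `k` coordinates are `T` and whose other coordinates are `1`. -/
def specPoint (k : ℕ) (T : R) (M : ℕ) (i : Fin M) : R := if (i : ℕ) + k < M then 1 else T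

theorem tail_specPoint (k : ℕ) (T : R) (M : ℕ) :
    Fin.tail (specPoint k T (M + 1)) = specPoint k T M := by
  funext i
  have : ((i : ℕ) + 1 + k < M + 1) ↔ (i : ℕ) + k < M := by omega
  simp [Fin.tail, specPoint, this]

theorem schurEval_specPoint_of_le (k : ℕ) (T : R) (M : ℕ) (hM : M ≤ k) (lam : Fin M → ℕ) :
    schurEval M lam (specPoint k T M) = ∑ _y ∈ gtPatterns M lam, T ^ ∑ j, lam j := by
  induction M with
  | zero => simp [schurEval, gtPatterns]
  | succ M ih =>
    have h0 : specPoint k T (M + 1) 0 = T := if_neg (by simp; omega)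
    rw [schurEval, tail_specPoint, h0, sum_gtPatterns_succ, Finset.mul_sum]
    refine Finset.sum_congr rfl fun ν hν => ?_
    rw [ih (by omega), Finset.mul_sum, Finset.mul_sum]
    refine Finset.sum_congr rfl fun y _ => ?_
    rw [Finset.prod_pow_eq_pow_sum, ← pow_add, ← pow_add, Fin.sum_univ_succ,
      ← Finset.sum_add_distrib]
    congr 2
    refine Finset.sum_congr rfl fun j _ => ?_
    exact Nat.sub_add_cancel (Finset.mem_Icc.1 (Fintype.mem_piFinset.1 hν j)).2

theorem schurEval_specPoint_add (k d : ℕ) (T : R) (lam : Fin (k + d) → ℕ) :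
    schurEval (k + d) lam (specPoint k T (k + d)) =
      ∑ y ∈ gtPatterns (k + d) lam, T ^ ∑ j : Fin k, y (k - 1 - j) j := by
  induction d with
  | zero =>
    refine (schurEval_specPoint_of_le k T k le_rfl lam).trans (Finset.sum_congr rfl fun y hy => ?_)
    congr 1
    exact Finset.sum_congr rfl fun j _ => ((mem_gtPatterns.1 hy).top j).symm
  | succ d ih =>
    have h0 : specPoint k T (k + d + 1) 0 = 1 := if_pos (by simp)
    change schurEval (k + d + 1) lam (specPoint k T (k + d + 1)) =
      ∑ y ∈ gtPatterns (k + d + 1) lam, _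
    rw [schurEval, tail_specPoint, h0, sum_gtPatterns_succ, one_pow, one_mul]
    refine Finset.sum_congr rfl fun ν _ => ?_
    simp only [one_pow, Finset.prod_const_one, one_mul]
    rw [ih]
    refine Finset.sum_congr rfl fun y _ => ?_
    congr 1
    exact Finset.sum_congr rfl fun j _ => (addTop_of_lt _ _ (by omega)).symm

end Patterns

section Arrays

variable {k l N : ℕ} {y : ℕ → ℕ → ℕ}

theorem IsGTPattern.le_rect (h : IsGTPattern (l + k) (rect l k N) y) {i j : ℕ}
    (hij : i + j < l + k) : y i j ≤ rect l k N ⟨l + k - 1 - i, by omega⟩ := by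
  have row_le := h.row_le i j (l + k - 1 - i - j) (by omega)
  rw [← h.top ⟨l + k - 1 - i, by omega⟩]
  refine row_le.trans (le_of_eq ?_)
  simp only
  congr 1 <;> omega

theorem IsGTPattern.rect_le (h : IsGTPattern (l + k) (rect l k N) y) {i j : ℕ}
    (hij : i + j < l + k) : rect l k N ⟨j, by omega⟩ ≤ y i j := by
  have col_le := h.col_le i j (l + k - 1 - i - j) (by omega)
  rw [← h.top ⟨j, by omega⟩]
  refine le_trans (le_of_eq ?_) col_le
  simp only
  congr 1
  omega

theorem IsGTPattern.eq_zero_of_le (h : IsGTPattern (l + k) (rect l k N) y) {i j : ℕ}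
    (hi : k ≤ i) : y i j = 0 := by
  rcases Nat.lt_or_ge (i + j) (l + k) with hij | hij
  · have hle := h.le_rect hij
    rw [rect, if_pos (by simp only; omega)] at hle
    exact Nat.le_zero.1 hle
  · exact h.zero i j hij

theorem IsGTPattern.le (h : IsGTPattern (l + k) (rect l k N) y) {i j : ℕ} : y i j ≤ N := by
  rcases Nat.lt_or_ge (i + j) (l + k) with hij | hij
  · refine (h.le_rect hij).trans ?_
    rw [rect]
    split_ifs <;> omega
  · rw [h.zero i j hij]
    exact Nat.zero_le _

theorem IsGTPattern.eq_of_le (h : IsGTPattern (l + k) (rect l k N) y) {i j : ℕ} (hj : l ≤ j)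
    (hij : i + j < l + k) : y i j = N := by
  have hle := h.rect_le hij
  rw [rect, if_neg (by simp only; omega)] at hle
  exact h.le.antisymm hle

/-- A `k × l` array with entries between `0` and `N`, weakly increasing along rows and weakly
decreasing down columns. -/
structure IsMonotoneArray (N : ℕ) (x : Fin k → Fin l → ℤ) : Prop where
  bounds : ∀ i j, 0 ≤ x i j ∧ x i j ≤ (N : ℤ)
  row : ∀ i, Monotone (x i)
  col : ∀ j, Antitone fun i => x i j

/-- The pattern with top row `rect l k N` obtained from a `k × l` array: the two triangles of the
pattern not covered by the array are filled with `N` and `0`. -/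
def patternOfArray (N : ℕ) (x : Fin k → Fin l → ℤ) (i j : ℕ) : ℕ :=
  if h : i < k ∧ j < l then (x ⟨i, h.1⟩ ⟨j, h.2⟩).toNat
  else if i < k ∧ i + j < l + k then N else 0

theorem patternOfArray_le {x : Fin k → Fin l → ℤ} (hx : IsMonotoneArray N x) (i j : ℕ) :
    patternOfArray N x i j ≤ N := by
  rw [patternOfArray]
  split_ifs
  · exact Int.toNat_le.2 (hx.bounds _ _).2
  · exact le_rfl
  · exact Nat.zero_le _

theorem patternOfArray_eq_zero (x : Fin k → Fin l → ℤ) {i j : ℕ} (h : k ≤ i ∨ l + k ≤ i + j) :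
    patternOfArray N x i j = 0 := by
  rw [patternOfArray, dif_neg (by omega), if_neg (by omega)]

theorem patternOfArray_eq_bound (x : Fin k → Fin l → ℤ) {i j : ℕ} (hj : l ≤ j)
    (hij : i + j < l + k) : patternOfArray N x i j = N := by
  rw [patternOfArray, dif_neg (by omega), if_pos (by omega)]

theorem IsMonotoneArray.isGTPattern {x : Fin k → Fin l → ℤ} (hx : IsMonotoneArray N x) :
    IsGTPattern (l + k) (rect l k N) (patternOfArray N x) where
  zero i j h := patternOfArray_eq_zero x (Or.inr h)
  top j := by
    rw [rect]
    split_ifs with hj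
    · exact patternOfArray_eq_zero x (Or.inl (by omega))
    · exact patternOfArray_eq_bound x (by omega) (by omega)
  col i j h := by
    by_cases hj : j < l
    · by_cases hi : i + 1 < k
      · rw [patternOfArray, patternOfArray, dif_pos ⟨hi, hj⟩, dif_pos ⟨by omega, hj⟩]
        exact Int.toNat_le_toNat (hx.col ⟨j, hj⟩ (Fin.mk_le_mk.2 (Nat.le_succ i)))
      · rw [patternOfArray_eq_zero x (Or.inl (by omega))]
        exact Nat.zero_le _
    · rw [patternOfArray_eq_bound (i := i) x (by omega) (by omega)]
      exact patternOfArray_le hx _ _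
  row i j h := by
    by_cases hi : i < k
    · by_cases hj : j + 1 < l
      · rw [patternOfArray, patternOfArray, dif_pos ⟨hi, by omega⟩, dif_pos ⟨hi, hj⟩]
        exact Int.toNat_le_toNat (hx.row ⟨i, hi⟩ (Fin.mk_le_mk.2 (Nat.le_succ j)))
      · rw [patternOfArray_eq_bound (j := j + 1) x (by omega) (by omega)]
        exact patternOfArray_le hx _ _
    · rw [patternOfArray_eq_zero x (Or.inl (by omega))]
      exact Nat.zero_le _

theorem IsGTPattern.patternOfArray_natCast (h : IsGTPattern (l + k) (rect l k N) y) :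
    patternOfArray N (fun (i : Fin k) (j : Fin l) => (y i j : ℤ)) = y := by
  funext i j
  rw [patternOfArray]
  split_ifs with h1 h2
  · exact Int.toNat_natCast _
  · exact (h.eq_of_le (by omega) h2.2).symm
  · rcases Nat.lt_or_ge (i + j) (l + k) with hij | hij
    · exact (h.eq_zero_of_le (by omega)).symm
    · exact (h.zero i j hij).symm

theorem IsMonotoneArray.natCast_patternOfArray {x : Fin k → Fin l → ℤ}
    (hx : IsMonotoneArray N x) :
    (fun (i : Fin k) (j : Fin l) => (patternOfArray N x i j : ℤ)) = x := by
  funext i j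
  rw [patternOfArray, dif_pos ⟨i.2, j.2⟩]
  exact Int.toNat_of_nonneg (hx.bounds i j).1

theorem IsGTPattern.isMonotoneArray (h : IsGTPattern (l + k) (rect l k N) y) :
    IsMonotoneArray N fun (i : Fin k) (j : Fin l) => (y i j : ℤ) where
  bounds i j := ⟨Int.natCast_nonneg _, Int.ofNat_le.2 h.le⟩
  row i j j' hj := by
    obtain ⟨d, hd⟩ := Nat.exists_eq_add_of_le (show (j : ℕ) ≤ j' from hj)
    simp only [hd]
    exact Int.ofNat_le.2 (h.row_le i j d (by omega))
  col j i i' hi := by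
    obtain ⟨d, hd⟩ := Nat.exists_eq_add_of_le (show (i : ℕ) ≤ i' from hi)
    simp only [hd]
    exact Int.ofNat_le.2 (h.col_le i j d (by omega))

theorem sum_antidiagonal_rev (y : ℕ → ℕ → ℕ) :
    ∑ i : Fin k, (y i (i.rev : Fin k) : ℤ) = ((∑ j : Fin k, y (k - 1 - j) j : ℕ) : ℤ) := by
  rw [← Equiv.sum_comp Fin.revPerm]
  push_cast
  refine Finset.sum_congr rfl fun j _ => ?_
  rw [Fin.revPerm_apply, Fin.rev_rev, Fin.val_rev, Nat.sub_sub, add_comm 1]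

theorem card_isMonotoneArray_eq_card_gtPatterns (k N n : ℕ) :
    Nat.card {x : Fin k → Fin k → ℤ // IsMonotoneArray N x ∧ ∑ i : Fin k, x i i.rev = n} =
      ((gtPatterns (k + k) (rect k k N)).filter
        fun y => ∑ j : Fin k, y (k - 1 - j) j = n).card := by
  rw [← Nat.card_eq_finsetCard]
  refine Nat.card_congr
    { toFun := fun x => ⟨patternOfArray N x.1, ?_⟩
      invFun := fun y => ⟨fun i j => (y.1 i j : ℤ), ?_⟩
      left_inv := fun x => Subtype.ext x.2.1.natCast_patternOfArray
      right_inv := fun y => Subtype.ext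
        (mem_gtPatterns.1 (Finset.mem_filter.1 y.2).1).patternOfArray_natCast }
  · obtain ⟨x, hx, h_sum⟩ := x
    refine Finset.mem_filter.2 ⟨mem_gtPatterns.2 hx.isGTPattern, ?_⟩
    rw [← hx.natCast_patternOfArray] at h_sum
    exact_mod_cast (sum_antidiagonal_rev _).symm.trans h_sum
  · obtain ⟨hy, h_sum⟩ := Finset.mem_filter.1 y.2
    exact ⟨(mem_gtPatterns.1 hy).isMonotoneArray,
      (sum_antidiagonal_rev _).trans (congrArg Nat.cast h_sum)⟩

end Arrays

section PowerCoefficients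

variable {n K : Type*} [Fintype n] [DecidableEq n] [Field K]

variable (n K) in
/-- The polynomial function on `n × n` matrices which takes `θ` to the coefficient of `T ^ m` in
`det (1 + T θ) ^ k`. -/
noncomputable def detPowCoeff (k m : ℕ) : MvPolynomial (n × n) K :=
  (detOneAddX (Matrix.mvPolynomialX n n K) ^ k).coeff m

theorem euler_detPowCoeff (k m : ℕ) :
    euler (detPowCoeff n K k m) = (m : K) • detPowCoeff n K k m := by
  have h := congrArg (fun p => p.coeff m)
    (coeffwiseDerivation_detOneAddX_pow (map_euler (n := n) (K := K)) k)
  rw [coeff_coeffwiseDerivation, coeff_polyEuler] at h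
  rw [detPowCoeff, h, MvPolynomial.smul_eq_C_mul, map_natCast]

theorem genericDet_pow_eq_sum (k : ℕ) (t : K) :
    genericDet n t ^ k =
      ∑ m ∈ Finset.range (k * Fintype.card n + 1), t ^ m • detPowCoeff n K k m := by
  have hdeg : (detOneAddX (Matrix.mvPolynomialX n n K) ^ k).natDegree < k * Fintype.card n + 1 :=
    Nat.lt_succ_of_le (natDegree_pow_le_of_le k (natDegree_detOneAddX_le _))
  rw [genericDet, ← eval_pow, eval_eq_sum_range' hdeg]
  refine Finset.sum_congr rfl fun m _ => ?_
  rw [MvPolynomial.smul_eq_C_mul, map_pow, mul_comm, detPowCoeff]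

variable [CharZero K] {k : ℕ} {L : MvPolynomial (n × n) K →ₗ[K] K}

theorem IsDetSemiinvariant.apply_detPowCoeff_mul_eq_zero (hL : IsDetSemiinvariant (k : K) L)
    {a b : ℕ} (h : a + b ≠ k * Fintype.card n) :
    L (detPowCoeff n K k a * detPowCoeff n K k b) = 0 := by
  have euler_apply := hL.apply_euler (detPowCoeff n K k a * detPowCoeff n K k b)
  rw [Derivation.leibniz, euler_detPowCoeff, euler_detPowCoeff, smul_eq_mul, smul_eq_mul,
    mul_smul_comm, mul_smul_comm, mul_comm (detPowCoeff n K k b), ← add_smul, map_smul,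
    smul_eq_mul] at euler_apply
  have hne : ((a + b : ℕ) : K) - ((k * Fintype.card n : ℕ) : K) ≠ 0 :=
    sub_ne_zero.2 (Nat.cast_injective.ne h)
  refine (mul_eq_zero.1 ?_).resolve_left hne
  push_cast
  linear_combination euler_apply

theorem IsDetSemiinvariant.eval_specPoint_detGenPoly (hL : IsDetSemiinvariant (k : K) L) (t : K) :
    MvPolynomial.eval (specPoint k t (k + k)) (detGenPoly (Fin (k + k)) L) =
      ∑ m ∈ Finset.range (k * Fintype.card n + 1), t ^ m *
        L (detPowCoeff n K k (k * Fintype.card n - m) * detPowCoeff n K k m) := by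
  have prod_eq : ∏ j : Fin (k + k), genericDet n (specPoint k t (k + k) j) =
      genericDet n 1 ^ k * genericDet n t ^ k := by
    rw [Fin.prod_univ_add]
    simp [specPoint]
  rw [eval_detGenPoly, prod_eq, genericDet_pow_eq_sum, genericDet_pow_eq_sum, Finset.mul_sum,
    map_sum]
  refine Finset.sum_congr rfl fun m hm => ?_
  have hm' : m ≤ k * Fintype.card n := Nat.lt_succ_iff.1 (Finset.mem_range.1 hm)
  rw [mul_smul_comm, map_smul, smul_eq_mul, Finset.sum_mul, map_sum,
    Finset.sum_eq_single (k * Fintype.card n - m)]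
  · rw [one_pow, one_smul]
  · intro a _ ha
    rw [one_pow, one_smul]
    exact hL.apply_detPowCoeff_mul_eq_zero (by omega)
  · exact fun h => absurd (Finset.mem_range.2 (by omega)) h

theorem IsDetSemiinvariant.apply_detPowCoeff_mul_eq_card (hL : IsDetSemiinvariant (k : K) L)
    (hdet : L ((Matrix.mvPolynomialX n n K).det ^ k) = 1) {m : ℕ} (hm : m ≤ k * Fintype.card n) :
    L (detPowCoeff n K k (k * Fintype.card n - m) * detPowCoeff n K k m) =
      ((gtPatterns (k + k) (rect k k (Fintype.card n))).filter
        fun y => ∑ j : Fin k, y (k - 1 - j) j = m).card := by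
  have poly_eq : ∑ m ∈ Finset.range (k * Fintype.card n + 1),
      C (L (detPowCoeff n K k (k * Fintype.card n - m) * detPowCoeff n K k m)) * X ^ m =
        ∑ y ∈ gtPatterns (k + k) (rect k k (Fintype.card n)),
          (X : K[X]) ^ ∑ j : Fin k, y (k - 1 - j) j := by
    refine Polynomial.funext fun t => ?_
    have eval_eq := hL.eval_specPoint_detGenPoly t
    rw [hL.detGenPoly_eq_schurEval hdet, map_schurEval] at eval_eq
    simp only [MvPolynomial.eval_X, schurEval_specPoint_add] at eval_eq
    simp only [eval_finsetSum, eval_mul, eval_C, eval_pow, eval_X, eval_eq, mul_comm (L _)]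
  have coeff_eq := congrArg (fun p : K[X] => p.coeff m) poly_eq
  simp only [finsetSum_coeff, coeff_C_mul_X_pow, coeff_X_pow] at coeff_eq
  rw [Finset.sum_ite_eq, if_pos (Finset.mem_range.2 (by omega))] at coeff_eq
  rw [coeff_eq, Finset.sum_boole]
  simp only [eq_comm]

end PowerCoefficients

section HaarInvariance

theorem integral_eq_zero_of_hasDerivAt_mul {G E : Type*} [Group G] [TopologicalSpace G]
    [ContinuousMul G] [CompactSpace G] [MeasurableSpace G] [BorelSpace G] [NormedAddCommGroup E]
    [NormedSpace ℝ E] {μ : Measure G} [IsFiniteMeasure μ] [μ.IsMulLeftInvariant] {u : ℝ → G}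
    {f f' : G → E} (hf : Continuous f) (hf' : Continuous f')
    (h : ∀ t θ, HasDerivAt (fun s => f (u s * θ)) (f' (u t * θ)) t) :
    ∫ θ, f' θ ∂μ = 0 := by
  have integrable_of_continuous {g : G → E} (hg : Continuous g) : Integrable g μ :=
    hg.integrable_of_hasCompactSupport (HasCompactSupport.of_compactSpace g)
  obtain ⟨B, hB⟩ := isCompact_univ.exists_bound_of_continuousOn hf'.continuousOn
  have hasDerivAt_integral := (hasDerivAt_integral_of_dominated_loc_of_deriv_le (μ := μ) (𝕜 := ℝ)
    (F := fun t θ => f (u t * θ)) (F' := fun t θ => f' (u t * θ)) (x₀ := 0)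
    (bound := fun _ => B) Filter.univ_mem
    (.of_forall fun t => ((integrable_of_continuous hf).comp_mul_left (u t)).aestronglyMeasurable)
    ((integrable_of_continuous hf).comp_mul_left (u 0))
    ((integrable_of_continuous hf').comp_mul_left (u 0)).aestronglyMeasurable
    (.of_forall fun θ t _ => hB (u t * θ) (Set.mem_univ _)) (integrable_const _)
    (.of_forall fun θ t _ => h t θ)).2
  simp only [integral_mul_left_eq_self] at hasDerivAt_integral
  exact hasDerivAt_integral.unique (hasDerivAt_const _ _)

variable {n : Type*} [Fintype n] [DecidableEq n]

instance : CompactSpace (Matrix.unitaryGroup n ℂ) := by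
  refine isCompact_iff_compactSpace.1 (IsCompact.of_isClosed_subset
    (isCompact_univ_pi fun _ : n => isCompact_univ_pi fun _ : n => isCompact_closedBall (0 : ℂ) 1)
    (isClosed_unitary (R := Matrix n n ℂ)) fun θ hθ i _ j _ => ?_)
  exact mem_closedBall_zero_iff.2 (entry_norm_bound_of_unitary hθ i j)

/-- Evaluation of a polynomial function at a matrix. -/
noncomputable def evalMatrix {R : Type*} [CommSemiring R] (θ : Matrix n n R) :
    MvPolynomial (n × n) R →ₐ[R] R :=
  MvPolynomial.aeval fun x => θ x.1 x.2

theorem evalMatrix_det {R : Type*} [CommRing R] (θ : Matrix n n R) :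
    evalMatrix θ (Matrix.mvPolynomialX n n R).det = θ.det := by
  rw [AlgHom.map_det, evalMatrix, Matrix.mvPolynomialX_mapMatrix_aeval]

theorem hasDerivAt_evalMatrix {γ : ℝ → Matrix n n ℂ} {Y : Matrix n n ℂ} {t : ℝ}
    (hγ : ∀ i j, HasDerivAt (fun s => γ s i j) ((Y * γ t) i j) t) (h : MvPolynomial (n × n) ℂ) :
    HasDerivAt (fun s => evalMatrix (γ s) h) (evalMatrix (γ t) (leftDeriv Y h)) t := by
  induction h using MvPolynomial.induction_on with
  | C a => simpa [evalMatrix, leftDeriv_C] using hasDerivAt_const t a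
  | add f g hf hg => simpa only [map_add] using hf.fun_add hg
  | mul_X f x hf =>
    have evalMatrix_leftDeriv_X : evalMatrix (γ t) (leftDeriv Y (MvPolynomial.X x)) =
        (Y * γ t) x.1 x.2 := by
      simp [evalMatrix, leftDeriv, MvPolynomial.mkDerivation_X, Matrix.mul_apply]
    have evalMatrix_X (s : ℝ) : evalMatrix (γ s) (MvPolynomial.X x) = γ s x.1 x.2 :=
      MvPolynomial.aeval_X _ x
    simp only [Derivation.leibniz, smul_eq_mul, map_add, map_mul, evalMatrix_X,
      evalMatrix_leftDeriv_X]
    rw [add_comm, mul_comm (γ t x.1 x.2)]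
    exact hf.fun_mul (hγ x.1 x.2)

theorem continuous_evalMatrix (h : MvPolynomial (n × n) ℂ) :
    Continuous fun θ : Matrix.unitaryGroup n ℂ => evalMatrix θ.1 h :=
  (MvPolynomial.continuous_eval h).comp
    (continuous_pi fun x => (continuous_apply_apply x.1 x.2).comp continuous_subtype_val)

open scoped Matrix.Norms.L2Operator in
theorem exists_unitaryGroup_hasDerivAt {Y : Matrix n n ℂ} (hY : Y ∈ skewAdjoint (Matrix n n ℂ)) :
    ∃ u : ℝ → Matrix.unitaryGroup n ℂ, ∀ t (θ : Matrix n n ℂ) i j,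
      HasDerivAt (fun s => ((u s).1 * θ) i j) ((Y * ((u t).1 * θ)) i j) t := by
  let : NormedAlgebra ℚ (Matrix n n ℂ) := .restrictScalars ℚ ℂ _
  refine ⟨fun t => ⟨NormedSpace.exp (t • Y),
    NormedSpace.exp_mem_unitary_of_mem_skewAdjoint (skewAdjoint.smul_mem t hY)⟩,
    fun t θ i j => ?_⟩
  have hasDerivAt_exp_mul := (hasDerivAt_exp_smul_const' (𝕂 := ℝ) Y t).mul_const θ
  rw [Matrix.mul_assoc] at hasDerivAt_exp_mul
  exact (Matrix.entryLinearMap ℝ ℂ i j).toContinuousLinearMap.hasFDerivAt.comp_hasDerivAt t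
    hasDerivAt_exp_mul

variable [MeasurableSpace (Matrix.unitaryGroup n ℂ)] [BorelSpace (Matrix.unitaryGroup n ℂ)]
  (μ : Measure (Matrix.unitaryGroup n ℂ)) [IsFiniteMeasure μ] (k : ℕ)

theorem integrable_star_det_pow_mul_evalMatrix (h : MvPolynomial (n × n) ℂ) :
    Integrable (fun θ : Matrix.unitaryGroup n ℂ => star (θ.1.det ^ k) * evalMatrix θ.1 h) μ := by
  refine Continuous.integrable_of_hasCompactSupport ?_ (HasCompactSupport.of_compactSpace _)
  exact (continuous_subtype_val.matrix_det.pow k).star.mul (continuous_evalMatrix h)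

/-- The linear functional `h ↦ ∫ conj (det θ) ^ k * h θ ∂μ` on polynomial functions. -/
noncomputable def detFunctional : MvPolynomial (n × n) ℂ →ₗ[ℂ] ℂ where
  toFun h := ∫ θ : Matrix.unitaryGroup n ℂ, star (θ.1.det ^ k) * evalMatrix θ.1 h ∂μ
  map_add' g h := by
    simp only [map_add, mul_add]
    exact integral_add (integrable_star_det_pow_mul_evalMatrix μ k g)
      (integrable_star_det_pow_mul_evalMatrix μ k h)
  map_smul' c h := by
    simp only [map_smul, smul_eq_mul, mul_left_comm _ c, integral_const_mul, RingHom.id_apply]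

theorem detFunctional_apply (h : MvPolynomial (n × n) ℂ) : detFunctional μ k h =
    ∫ θ : Matrix.unitaryGroup n ℂ, star (θ.1.det ^ k) * evalMatrix θ.1 h ∂μ := rfl

theorem detFunctional_leftDeriv_of_mem_skewAdjoint [μ.IsMulLeftInvariant] {Y : Matrix n n ℂ}
    (hY : Y ∈ skewAdjoint (Matrix n n ℂ)) (h : MvPolynomial (n × n) ℂ) :
    detFunctional μ k (leftDeriv Y h) = k * Y.trace * detFunctional μ k h := by
  obtain ⟨u, hu⟩ := exists_unitaryGroup_hasDerivAt hY
  let D := (Matrix.mvPolynomialX n n ℂ).det ^ k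
  have evalMatrix_D (θ : Matrix n n ℂ) : evalMatrix θ D = θ.det ^ k := by
    rw [map_pow, evalMatrix_det]
  have star_trace : star ((k : ℂ) * Y.trace) = -(k * Y.trace) := by
    rw [star_mul', star_natCast, ← Matrix.trace_conjTranspose, ← Matrix.star_eq_conjTranspose,
      skewAdjoint.mem_iff.1 hY, Matrix.trace_neg, mul_neg]
  have integral_zero := integral_eq_zero_of_hasDerivAt_mul (μ := μ) (u := u)
    ((continuous_evalMatrix D).star.mul (continuous_evalMatrix h))
    (((continuous_evalMatrix (leftDeriv Y D)).star.mul (continuous_evalMatrix h)).add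
      ((continuous_evalMatrix D).star.mul (continuous_evalMatrix (leftDeriv Y h))))
    fun t θ => (hasDerivAt_evalMatrix (hu t θ.1) D).star.mul (hasDerivAt_evalMatrix (hu t θ.1) h)
  rw [← sub_eq_zero, ← smul_eq_mul, ← map_smul, ← map_sub, detFunctional_apply, ← integral_zero]
  refine integral_congr_ae (.of_forall fun θ => ?_)
  simp only [D, leftDeriv_det_pow, map_smul, map_sub, smul_eq_mul, star_mul', star_trace,
    evalMatrix_D, Pi.add_apply, Pi.mul_apply]
  ring

theorem isDetSemiinvariant_detFunctional [μ.IsMulLeftInvariant] :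
    IsDetSemiinvariant (k : ℂ) (detFunctional μ k) := by
  intro Y h
  have of_isSelfAdjoint {A : Matrix n n ℂ} (hA : IsSelfAdjoint A) :
      detFunctional μ k (leftDeriv A h) = k * A.trace * detFunctional μ k h := by
    have apply_I_smul := detFunctional_leftDeriv_of_mem_skewAdjoint μ k
      (hA.smul_mem_skewAdjoint Complex.conj_I) h
    rw [map_smul, Derivation.smul_apply, map_smul, Matrix.trace_smul, smul_eq_mul, smul_eq_mul]
      at apply_I_smul
    refine mul_left_cancel₀ Complex.I_ne_zero ?_
    linear_combination apply_I_smul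
  rw [← realPart_add_I_smul_imaginaryPart Y, map_add, map_smul, Derivation.add_apply,
    Derivation.smul_apply, map_add, map_smul, of_isSelfAdjoint (realPart Y).2,
    of_isSelfAdjoint (imaginaryPart Y).2, Matrix.trace_add, Matrix.trace_smul, smul_eq_mul,
    smul_eq_mul]
  ring

theorem detFunctional_det_pow [IsProbabilityMeasure μ] :
    detFunctional μ k ((Matrix.mvPolynomialX n n ℂ).det ^ k) = 1 := by
  have star_mul_self (θ : Matrix.unitaryGroup n ℂ) : star (θ.1.det ^ k) * θ.1.det ^ k = 1 := by
    rw [star_pow, ← mul_pow, (Unitary.mem_iff.1 (Matrix.det_of_mem_unitary θ.2)).1, one_pow]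
  simp only [detFunctional_apply, map_pow, evalMatrix_det, star_mul_self]
  simp

end HaarInvariance

section Conjugation

theorem coeff_pow_eq_sum_antidiagonalTuple {R : Type*} [CommSemiring R] (p : R[X]) (k m : ℕ) :
    (p ^ k).coeff m = ∑ x ∈ Finset.Nat.antidiagonalTuple k m, ∏ i, p.coeff (x i) := by
  have coeff_prod := PowerSeries.coeff_prod (fun _ : Fin k => (p : PowerSeries R)) m Finset.univ
  rw [Finset.prod_const, Finset.card_univ, Fintype.card_fin, ← Polynomial.coe_pow,
    Polynomial.coeff_coe] at coeff_prod
  rw [coeff_prod]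
  exact Finset.sum_equiv Finsupp.equivFunOnFinite
    (by simp [Finset.mem_finsuppAntidiag, Finset.Nat.mem_antidiagonalTuple]) (by simp)

theorem reverse_pow_of_domain {R : Type*} [Semiring R] [NoZeroDivisors R] (p : R[X]) (k : ℕ) :
    (p ^ k).reverse = p.reverse ^ k := by
  induction k with
  | zero => rw [pow_zero, pow_zero, ← C_1, reverse_C]
  | succ k ih => rw [pow_succ, pow_succ, reverse_mul_of_domain, ih]

variable {n R : Type*} [Fintype n] [DecidableEq n] [CommRing R]

theorem detOneAddX_transpose (M : Matrix n n R) : detOneAddX M.transpose = detOneAddX M := by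
  rw [detOneAddX, detOneAddX, ← Matrix.det_transpose (1 + _), Matrix.transpose_add,
    Matrix.transpose_one, Matrix.transpose_smul, Matrix.transpose_map,
    Matrix.transpose_transpose]

theorem detOneAddX_eq_reverse_charpoly (M : Matrix n n R) :
    detOneAddX M = (-M).charpoly.reverse := by
  rw [Matrix.reverse_charpoly, Matrix.charpolyRev, detOneAddX, Matrix.map_neg _ fun _ => C_neg,
    smul_neg, sub_neg_eq_add]

theorem detOneAddX_eq_C_det_mul_charpoly {A B : Matrix n n R} (h : A * B = 1) :
    detOneAddX A = C A.det * (-B).charpoly := by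
  have one_add_eq : 1 + (X : R[X]) • A.map C = A.map C * (-B).charmatrix := by
    rw [Matrix.charmatrix, RingHom.mapMatrix_apply, Matrix.map_neg _ fun _ => C_neg,
      sub_neg_eq_add, mul_add, ← Matrix.map_mul, h, Matrix.map_one _ C_0 C_1, add_comm,
      Matrix.scalar_apply, ← Matrix.smul_one_eq_diagonal, Matrix.mul_smul, mul_one]
  rw [detOneAddX, one_add_eq, Matrix.det_mul, Matrix.charpoly, RingHom.map_det,
    RingHom.mapMatrix_apply]

theorem coeff_charpoly_neg_pow [IsDomain R] (M : Matrix n n R) {k m : ℕ}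
    (hm : m ≤ k * Fintype.card n) :
    ((-M).charpoly ^ k).coeff m = (detOneAddX M ^ k).coeff (k * Fintype.card n - m) := by
  rw [detOneAddX_eq_reverse_charpoly, ← reverse_pow_of_domain, coeff_reverse,
    natDegree_pow, Matrix.charpoly_natDegree_eq_dim, revAt_le (Nat.sub_le _ _),
    Nat.sub_sub_self hm]

theorem map_conj_detOneAddX {θ : Matrix n n ℂ} (hθ : θ ∈ Matrix.unitaryGroup n ℂ) :
    (detOneAddX θ).map (starRingEnd ℂ) = C (star θ.det) * (-θ).charpoly := by
  rw [map_detOneAddX, ← detOneAddX_transpose, ← Matrix.transpose_map, ← Matrix.det_conjTranspose]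
  exact detOneAddX_eq_C_det_mul_charpoly (Matrix.mem_unitaryGroup_iff'.1 hθ)

theorem star_coeff_detOneAddX_pow {θ : Matrix n n ℂ} (hθ : θ ∈ Matrix.unitaryGroup n ℂ) {k m : ℕ}
    (hm : m ≤ k * Fintype.card n) : star ((detOneAddX θ ^ k).coeff m) =
      star (θ.det ^ k) * (detOneAddX θ ^ k).coeff (k * Fintype.card n - m) := by
  rw [← starRingEnd_apply, ← coeff_map, Polynomial.map_pow, map_conj_detOneAddX hθ, mul_pow,
    ← C_pow, coeff_C_mul, coeff_charpoly_neg_pow θ hm, star_pow]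

theorem evalMatrix_detPowCoeff {K : Type*} [Field K] (θ : Matrix n n K) (k m : ℕ) :
    evalMatrix θ (detPowCoeff n K k m) = (detOneAddX θ ^ k).coeff m := by
  rw [detPowCoeff, ← AlgHom.coe_toRingHom, ← coeff_map, Polynomial.map_pow, map_detOneAddX]
  exact congrArg (fun M => (detOneAddX M ^ k).coeff m) (Matrix.mvPolynomialX_mapMatrix_aeval K θ)

theorem normSq_coeff_detOneAddX_pow {θ : Matrix n n ℂ} (hθ : θ ∈ Matrix.unitaryGroup n ℂ)
    {k m : ℕ} (hm : m ≤ k * Fintype.card n) : ((‖(detOneAddX θ ^ k).coeff m‖ ^ 2 : ℝ) : ℂ) =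
      star (θ.det ^ k) * evalMatrix θ
        (detPowCoeff n ℂ k (k * Fintype.card n - m) * detPowCoeff n ℂ k m) := by
  rw [Complex.ofReal_pow, ← Complex.conj_mul', starRingEnd_apply, star_coeff_detOneAddX_pow hθ hm,
    map_mul, evalMatrix_detPowCoeff, evalMatrix_detPowCoeff, mul_assoc]

end Conjugation

theorem matrixIntegral_eq_detFunctional {N k m : ℕ} (hm : m ≤ k * N)
    (μ : Measure (Matrix.unitaryGroup (Fin N) ℂ)) [IsFiniteMeasure μ] :
    (matrixIntegral k m N μ : ℂ) = detFunctional μ k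
      (detPowCoeff (Fin N) ℂ k (k * N - m) * detPowCoeff (Fin N) ℂ k m) := by
  rw [matrixIntegral, ← integral_complex_ofReal, detFunctional_apply]
  refine integral_congr_ae (.of_forall fun θ => ?_)
  have coeff_eq : ∑ x ∈ Finset.Nat.antidiagonalTuple k m, ∏ i, extPowTrace N θ (x i) =
      (detOneAddX θ.1 ^ k).coeff m :=
    (coeff_pow_eq_sum_antidiagonalTuple _ k m).symm
  have normSq_eq := normSq_coeff_detOneAddX_pow θ.2 (hm.trans_eq (by rw [Fintype.card_fin]))
  rw [Fintype.card_fin] at normSq_eq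
  simp only [coeff_eq, normSq_eq]

theorem matrixIntegral_eq_card {N k m : ℕ} (hm : m ≤ k * N)
    (μ : Measure (Matrix.unitaryGroup (Fin N) ℂ)) [IsProbabilityMeasure μ] [μ.IsMulLeftInvariant] :
    matrixIntegral k m N μ = Nat.card {x : Fin k → Fin k → ℤ //
      IsMonotoneArray N x ∧ ∑ i, x i i.rev = (k * N - m : ℕ)} := by
  have card_eq := (isDetSemiinvariant_detFunctional μ k).apply_detPowCoeff_mul_eq_card
    (detFunctional_det_pow μ k) (Nat.sub_le _ m)
  rw [Fintype.card_fin, Nat.sub_sub_self hm, mul_comm (detPowCoeff _ _ _ m),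
    ← matrixIntegral_eq_detFunctional hm, ← card_isMonotoneArray_eq_card_gtPatterns] at card_eq
  exact_mod_cast card_eq

end UnitaryMoments

/-- `x i j` is the entry `x_i^{(j)}` (row `i`, superscript `j`).  The conditions are:
entries in `[0,N]`; anti-diagonal sum `x_1^{(k)} + x_2^{(k-1)} + ⋯ + x_k^{(1)} = kN − m`;
rows weakly increasing in the superscript and columns weakly decreasing down rows. -/
theorem I_k_eq_lattice_point_count (k N m : ℕ) (hk : 1 ≤ k) (hN : 1 ≤ N) (hm : m ≤ k * N)
    (μ : Measure (Matrix.unitaryGroup (Fin N) ℂ))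
    (hμ : μ.IsHaarMeasure) (hprob : IsProbabilityMeasure μ) :
    matrixIntegral k m N μ =
      Nat.card {x : Fin k → Fin k → ℤ //
        (∀ i j, 0 ≤ x i j ∧ x i j ≤ (N : ℤ)) ∧
        (∑ i : Fin k, x i i.rev) = (k : ℤ) * N - m ∧
        (∀ i : Fin k, Monotone (x i)) ∧
        (∀ j : Fin k, Antitone (fun i => x i j))} := by
  rw [UnitaryMoments.matrixIntegral_eq_card hm μ, Nat.cast_inj]
  refine Nat.card_congr (Equiv.subtypeEquivRight fun x => ?_)
  rw [Nat.cast_sub hm, Nat.cast_mul]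
  exact ⟨fun ⟨⟨bounds, row, col⟩, sum_eq⟩ => ⟨bounds, sum_eq, row, col⟩,
    fun ⟨bounds, sum_eq, row, col⟩ => ⟨⟨bounds, row, col⟩, sum_eq⟩⟩
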